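/- arXiv:math/0608252 — 2 statements merged into one kernel-verified Lean document; each statement's English description precedes it below -/
import Mathlib

section
/- If p and q are strictly positive probability vectors on finite alphabets with H(p) > H(q), then there exists a finitary homomorphism from the Bernoulli scheme BS(p) to the Bernoulli scheme BS(q). -/
open MeasureTheory ENNReal Filter

noncomputable section

/-- The left shift transformation on bi-infinite sequences: `(shift x) n = x (n+1)`. -/
def shift {A : Type*} : (ℤ → A) → (ℤ → A) := fun x n => x (n + 1)

/-- `φ` is a homomorphism (factor map) from the shift system `(ℤ → A, μ, shift)` to
`(ℤ → B, ν, shift)`, defined on the shift-invariant full-measure domain `D`. -/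
structure IsFactorMap {A B : Type*} [MeasurableSpace A] [MeasurableSpace B]
    (μ : Measure (ℤ → A)) (ν : Measure (ℤ → B))
    (D : Set (ℤ → A)) (φ : (ℤ → A) → (ℤ → B)) : Prop where
  measurable_map : Measurable φ
  dom_measurable : MeasurableSet D
  dom_shift_invariant : shift ⁻¹' D = D
  dom_full : μ D = 1
  pushforward : ν = μ.map φ
  equivariant : ∀ x ∈ D, φ (shift x) = shift (φ x)

/-- The window `[-q, r]` of `x` determines the zero coordinate of the image under `φ`
(among points of the domain `D`). -/
def DeterminesAt {A B : Type*} (D : Set (ℤ → A)) (φ : (ℤ → A) → (ℤ → B))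
    (q r : ℕ) (x : ℤ → A) : Prop :=
  ∀ y ∈ D, (∀ i : ℤ, -(q : ℤ) ≤ i → i ≤ (r : ℤ) → y i = x i) → φ y 0 = φ x 0

/-- A homomorphism `φ` with domain `D` is finitary if for almost every `x` in the domain
there are nonnegative integers `q`, `r` such that the coordinates `x_{-q}, …, x_r`
determine `(φ x)_0`. -/
def IsFinitary {A B : Type*} [MeasurableSpace A] [MeasurableSpace B]
    (μ : Measure (ℤ → A)) (D : Set (ℤ → A)) (φ : (ℤ → A) → (ℤ → B)) : Prop :=
  ∀ᵐ x ∂μ, x ∈ D → ∃ q r : ℕ, DeterminesAt D φ q r x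

/-- The code length `C(x) = q(x) + r(x)` with `q(x), r(x)` minimal such that the window
`[-q(x), r(x)]` determines the zero output coordinate (`⊤` if no finite window works). -/
def codeLength {A B : Type*} (D : Set (ℤ → A)) (φ : (ℤ → A) → (ℤ → B))
    (x : ℤ → A) : ℝ≥0∞ :=
  ⨅ (q : ℕ) (r : ℕ) (_ : DeterminesAt D φ q r x), ((q : ℝ≥0∞) + (r : ℝ≥0∞))

/-- `μ` is the Bernoulli (product) measure on `(ℤ → A)` given by the probability vector `p`. -/
def IsBernoulliMeasure {A : Type*} [MeasurableSpace A] (μ : Measure (ℤ → A)) (p : A → ℝ) : Prop :=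
  ∀ (F : Finset ℤ) (s : ℤ → A),
    μ {x | ∀ i ∈ F, x i = s i} = ENNReal.ofReal (∏ i ∈ F, p (s i))

/-- A strictly positive probability vector on a finite alphabet. -/
def IsProbVector {A : Type*} [Fintype A] (p : A → ℝ) : Prop :=
  (∀ i, 0 < p i) ∧ ∑ i, p i = 1

/-- The entropy `H(p) = -∑ p_i log p_i` of a probability vector. -/
def vecEntropy {A : Type*} [Fintype A] (p : A → ℝ) : ℝ := -∑ i, p i * Real.log (p i)

/-- A finitary isomorphism: a pair of mutually inverse finitary factor maps. -/
def IsFinitaryIsomorphism {A B : Type*} [MeasurableSpace A] [MeasurableSpace B]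
    (μ : Measure (ℤ → A)) (ν : Measure (ℤ → B))
    (D : Set (ℤ → A)) (E : Set (ℤ → B))
    (φ : (ℤ → A) → (ℤ → B)) (ψ : (ℤ → B) → (ℤ → A)) : Prop :=
  IsFactorMap μ ν D φ ∧ IsFactorMap ν μ E ψ ∧
  IsFinitary μ D φ ∧ IsFinitary ν E ψ ∧
  (∀ x ∈ D, φ x ∈ E ∧ ψ (φ x) = x) ∧ (∀ y ∈ E, ψ y ∈ D ∧ φ (ψ y) = y)

/-!
Because `H(q) < H(p)`, independent letters of law `p` can be turned into independent letters of
law `q` with a gain: a word of length `n` can be decoded from at most `ρ * n + C` letters in the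
mean, for some `ρ < 1`. The decoder is greedy. It assigns input words to output words as long as
the probabilities fit, and the probability that is left over decays exponentially, since it is at
most the probability of the lightest rejected input word times the number of output words, up to
output words which are lighter still.

Runs of a fixed letter, the markers, cut the input into pieces. A machine started at a marker has
one decoding job for each piece, of the length of the piece, and gives every input letter to the
newest unfinished job. Its output does not depend on the marker at which it was started, so it
defines a finitary map which commutes with the shift. If the markers are so long that `ρ` plus `C`
times their frequency is less than `1`, the work to be done decreases in the mean, and almost
surely all jobs are finished again and again. The probability that the output agrees with a given
pattern is at most its probability under `ν`, because at each time the conditional probability of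
the pattern is estimated by a superharmonic function of the stack of jobs. Probability measures
which are so dominated on all cylinders are equal.
-/

section ProbVector

variable {A : Type*} [Fintype A] {p : A → ℝ}

lemma IsProbVector.nonempty (hp : IsProbVector p) : Nonempty A := by
  by_contra h
  rw [not_nonempty_iff] at h
  simpa using hp.2

lemma IsProbVector.le_one (hp : IsProbVector p) (a : A) : p a ≤ 1 :=
  hp.2 ▸ Finset.single_le_sum (fun b _ => (hp.1 b).le) (Finset.mem_univ a)

lemma IsProbVector.vecEntropy_nonneg (hp : IsProbVector p) : 0 ≤ vecEntropy p := by
  rw [vecEntropy, neg_nonneg]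
  exact Finset.sum_nonpos fun a _ =>
    mul_nonpos_of_nonneg_of_nonpos (hp.1 a).le (Real.log_nonpos (hp.1 a).le (hp.le_one a))

lemma IsProbVector.exists_lt_one (hp : IsProbVector p) (h : 0 < vecEntropy p) :
    ∃ a, p a < 1 := by
  by_contra! hone
  have hp1 : ∀ a, p a = 1 := fun a => (hp.le_one a).antisymm (hone a)
  simp [vecEntropy, hp1] at h

lemma IsProbVector.sum_ofReal (hp : IsProbVector p) : ∑ a, ENNReal.ofReal (p a) = 1 := by
  rw [← ENNReal.ofReal_sum_of_nonneg fun a _ => (hp.1 a).le, hp.2, ENNReal.ofReal_one]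

lemma IsProbVector.ofReal_ne_zero (hp : IsProbVector p) (a : A) : ENNReal.ofReal (p a) ≠ 0 :=
  (ENNReal.ofReal_pos.2 (hp.1 a)).ne'

end ProbVector

lemma IsBernoulliMeasure.isProbabilityMeasure {A : Type*} [MeasurableSpace A] [Nonempty A]
    {p : A → ℝ} {μ : Measure (ℤ → A)} (hμ : IsBernoulliMeasure μ p) : IsProbabilityMeasure μ :=
  ⟨by simpa using hμ ∅ fun _ => Classical.arbitrary A⟩

namespace FinitaryCoding

open Finset

section Transition

variable {A S : Type*} [Fintype A] {P : A → ℝ≥0∞} {step : S → A → S}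

/-- The transition operator of the Markov chain on `S` that moves from `σ` to `step σ a` with
weight `P a`; its `t`-th iterate takes the expectation after `t` steps. -/
def transition (P : A → ℝ≥0∞) (step : S → A → S) (F : S → ℝ≥0∞) (σ : S) : ℝ≥0∞ :=
  ∑ a, P a * F (step σ a)

lemma monotone_transition : Monotone (transition P step) := fun F G h σ => by
  unfold transition
  gcongr
  exact h _

lemma iterate_transition_le {F : S → ℝ≥0∞} (h : transition P step F ≤ F) (t : ℕ) :
    (transition P step)^[t] F ≤ F :=
  monotone_transition.antitone_iterate_of_map_le h t.zero_le

lemma transition_sum {ι : Type*} (s : Finset ι) (F : ι → S → ℝ≥0∞) :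
    transition P step (∑ i ∈ s, F i) = ∑ i ∈ s, transition P step (F i) := by
  ext σ
  simp only [transition, Finset.sum_apply, Finset.mul_sum]
  exact Finset.sum_comm

lemma sum_iterate_transition_le {V g : S → ℝ≥0∞} (h : transition P step V + g ≤ V) (n : ℕ) :
    ∑ t ∈ range n, (transition P step)^[t] g ≤ V := by
  induction n with
  | zero => simp
  | succ n ih =>
    calc ∑ t ∈ range (n + 1), (transition P step)^[t] g
        = transition P step (∑ t ∈ range n, (transition P step)^[t] g) + g := by
          simp only [Finset.sum_range_succ', Function.iterate_succ_apply', transition_sum,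
            Function.iterate_zero, id]
      _ ≤ transition P step V + g := by gcongr; exact monotone_transition ih
      _ ≤ V := h

lemma nsmul_iterate_transition_le {V g : S → ℝ≥0∞} (h : transition P step V + g ≤ V)
    (hg : transition P step g ≤ g) (n : ℕ) : n • (transition P step)^[n] g ≤ V :=
  calc n • (transition P step)^[n] g
      = ∑ _t ∈ range n, (transition P step)^[n] g := by simp
    _ ≤ ∑ t ∈ range n, (transition P step)^[t] g := Finset.sum_le_sum fun _ ht =>
        monotone_transition.antitone_iterate_of_map_le hg (mem_range.1 ht).le
    _ ≤ V := sum_iterate_transition_le h n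

lemma sum_mul_add_const (hP : ∑ a, P a = 1) (f : A → ℝ≥0∞) (c : ℝ≥0∞) :
    ∑ a, P a * (f a + c) = ∑ a, P a * f a + c := by
  simp_rw [mul_add]
  rw [Finset.sum_add_distrib, ← Finset.sum_mul, hP, one_mul]

open Classical in
/-- The chain frozen as soon as it leaves `bad`. -/
def stoppedStep (step : S → A → S) (bad : Set S) (σ : S) (a : A) : S :=
  if σ ∈ bad then step σ a else σ

variable {bad : Set S}

lemma transition_stoppedStep_of_mem {σ : S} (h : σ ∈ bad) (F : S → ℝ≥0∞) :
    transition P (stoppedStep step bad) F σ = transition P step F σ := by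
  simp [transition, stoppedStep, h]

lemma transition_stoppedStep_of_notMem (hP : ∑ a, P a = 1) {σ : S} (h : σ ∉ bad)
    (F : S → ℝ≥0∞) : transition P (stoppedStep step bad) F σ = F σ := by
  simp [transition, stoppedStep, h, ← Finset.sum_mul, hP]

/-- The Foster–Lyapunov drift bound on the mean number of steps spent in the bad states. -/
lemma nsmul_iterate_transition_stoppedStep_le (hP : ∑ a, P a = 1) {V : S → ℝ≥0∞} {δ : ℝ≥0∞}
    (hV : ∀ σ ∈ bad, transition P step V σ + δ ≤ V σ) (n : ℕ) :
    n • (transition P (stoppedStep step bad))^[n] (bad.indicator fun _ => δ) ≤ V := by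
  refine nsmul_iterate_transition_le (fun σ => ?_) (fun σ => ?_) n <;> by_cases h : σ ∈ bad
  · simpa [transition_stoppedStep_of_mem h, h] using hV σ h
  · simp [transition_stoppedStep_of_notMem hP h, h]
  · calc transition P (stoppedStep step bad) (bad.indicator fun _ => δ) σ
        ≤ ∑ a, P a * δ := Finset.sum_le_sum fun a _ => by
          gcongr
          exact Set.indicator_le_self' (fun _ _ => bot_le) _
      _ = bad.indicator (fun _ => δ) σ := by simp [← Finset.sum_mul, hP, h]
  · rw [transition_stoppedStep_of_notMem hP h]

end Transition

section Words

variable {A S : Type*} {P : A → ℝ≥0∞}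

/-- The weight of a word with independent letters. -/
def wordWeight (P : A → ℝ≥0∞) (w : List A) : ℝ≥0∞ := (w.map P).prod

lemma wordWeight_cons (P : A → ℝ≥0∞) (a : A) (w : List A) :
    wordWeight P (a :: w) = P a * wordWeight P w := by
  simp [wordWeight]

variable [Fintype A]

/-- The words of length `t`. -/
def words (A : Type*) [Fintype A] (t : ℕ) : Finset (List A) :=
  (List.finite_length_eq A t).toFinset

lemma mem_words {t : ℕ} {w : List A} : w ∈ words A t ↔ w.length = t := by
  simp [words]

lemma words_zero : words A 0 = {[]} := by
  ext w
  simp [mem_words]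

lemma sum_words_succ {M : Type*} [AddCommMonoid M] (t : ℕ) (F : List A → M) :
    ∑ w ∈ words A (t + 1), F w = ∑ w ∈ words A t, ∑ a, F (a :: w) := by
  classical
  have hsucc : words A (t + 1) = (words A t ×ˢ univ).image fun y => y.2 :: y.1 := by
    ext w
    cases w <;> simp [mem_words]
  rw [hsucc, Finset.sum_image fun y _ z _ h => ?_, Finset.sum_product]
  simp only [List.cons.injEq] at h
  exact Prod.ext h.2 h.1

lemma sum_wordWeight_rpow (P : A → ℝ≥0∞) {s : ℝ} (hs : 0 ≤ s) (t : ℕ) :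
    ∑ w ∈ words A t, wordWeight P w ^ s = (∑ a, P a ^ s) ^ t := by
  induction t with
  | zero => simp [words_zero, wordWeight]
  | succ t ih =>
    simp_rw [sum_words_succ, wordWeight_cons, ENNReal.mul_rpow_of_nonneg _ _ hs,
      ← Finset.sum_mul, ← Finset.mul_sum, ih, pow_succ']

lemma sum_wordWeight (hP : ∑ a, P a = 1) (t : ℕ) : ∑ w ∈ words A t, wordWeight P w = 1 := by
  simpa [hP] using sum_wordWeight_rpow P zero_le_one t

lemma iterate_transition_apply (P : A → ℝ≥0∞) (step : S → A → S) (F : S → ℝ≥0∞) (t : ℕ)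
    (σ : S) : (transition P step)^[t] F σ =
      ∑ w ∈ words A t, wordWeight P w * F (w.foldl step σ) := by
  induction t generalizing σ with
  | zero => simp [words_zero, wordWeight]
  | succ t ih =>
    rw [Function.iterate_succ_apply', transition]
    simp_rw [ih, Finset.mul_sum]
    rw [Finset.sum_comm, sum_words_succ]
    simp only [wordWeight_cons, List.foldl_cons, mul_assoc]

lemma iterate_transition_cons_nil (P : A → ℝ≥0∞) (F : List A → ℝ≥0∞) (t : ℕ) :
    (transition P fun w a => a :: w)^[t] F [] = ∑ w ∈ words A t, wordWeight P w * F w := by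
  induction t generalizing F with
  | zero => simp [words_zero, wordWeight]
  | succ t ih =>
    rw [Function.iterate_succ_apply, ih, sum_words_succ]
    refine Finset.sum_congr rfl fun w _ => ?_
    simp only [transition, Finset.mul_sum, wordWeight_cons]
    exact Finset.sum_congr rfl fun a _ => by ring

end Words

section Window

variable {A S : Type*}

/-- The word `x u, …, x (u + n - 1)`. -/
def window (x : ℤ → A) (u : ℤ) (n : ℕ) : List A := (List.range n).map fun i : ℕ => x (u + i)

variable {x y : ℤ → A} {u : ℤ} {n : ℕ}

lemma window_zero : window x u 0 = [] := rfl

lemma window_one : window x u 1 = [x u] := by simp [window]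

lemma window_add (x : ℤ → A) (u : ℤ) (m n : ℕ) :
    window x u (m + n) = window x u m ++ window x (u + m) n := by
  simp [window, List.range_add, add_assoc]

lemma window_succ (x : ℤ → A) (u : ℤ) (n : ℕ) :
    window x u (n + 1) = window x u n ++ [x (u + n)] := by
  rw [window_add, window_one]

lemma window_congr (h : ∀ i, u ≤ i → i < u + n → y i = x i) : window y u n = window x u n :=
  List.map_congr_left fun i hi => h _ (by omega) (by have := List.mem_range.1 hi; omega)

lemma window_shift : window (shift x) u n = window x (u + 1) n := by
  simp only [window, shift, add_right_comm]

lemma window_eq_replicate {a : A} (h : ∀ i, u ≤ i → i < u + n → x i = a) :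
    window x u n = List.replicate n a :=
  calc window x u n = window (fun _ => a) u n := window_congr h
    _ = List.replicate n a := by simp [window]

lemma window_eq_iff {w : List A} :
    window x u n = w ↔ w.length = n ∧ ∀ i : ℕ, ∀ h : i < w.length, x (u + i) = w[i] := by
  rw [List.ext_getElem_iff]
  simp only [window, List.length_map, List.length_range, List.getElem_map, List.getElem_range]
  constructor
  · rintro ⟨h, h'⟩
    exact ⟨h.symm, fun i hi => h' i (h ▸ hi) hi⟩
  · rintro ⟨h, h'⟩
    exact ⟨h.symm, fun i _ hi => h' i hi⟩

lemma foldl_stoppedStep_window {step : S → A → S} {bad : Set S} {σ : S}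
    (h : ∀ t < n, (window x u t).foldl step σ ∈ bad) :
    (window x u n).foldl (stoppedStep step bad) σ = (window x u n).foldl step σ := by
  induction n with
  | zero => rfl
  | succ n ih =>
    rw [window_succ, List.foldl_append, List.foldl_append, ih fun t ht => h t (by omega)]
    simp [stoppedStep, h n (by omega)]

variable [MeasurableSpace A] {p : A → ℝ} {μ : Measure (ℤ → A)}

lemma measure_window_eq [Fintype A] (hp : IsProbVector p) (hμ : IsBernoulliMeasure μ p) (u : ℤ)
    (w : List A) :
    μ {x | window x u w.length = w} = wordWeight (fun a => ENNReal.ofReal (p a)) w := by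
  have := hp.nonempty
  let letter : ℤ → A := fun i => w.getD (i - u).toNat (Classical.arbitrary A)
  have hletter : ∀ i (h : i < w.length), letter (u + (i : ℕ)) = w[i] := fun i h => by
    simp [letter, h]
  have hset : {x | window x u w.length = w} =
      {x | ∀ i ∈ ((range w.length).map Nat.castEmbedding).map (addLeftEmbedding u),
        x i = letter i} := by
    ext x
    simp only [Set.mem_ofPred_eq, window_eq_iff, true_and, Finset.forall_mem_map, mem_range,
      Nat.castEmbedding_apply, addLeftEmbedding_apply]
    exact forall₂_congr fun i h => by rw [hletter i h]
  rw [hset, hμ, ENNReal.ofReal_prod_of_nonneg fun i _ => (hp.1 _).le, Finset.prod_map,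
    Finset.prod_map, Finset.prod_range, wordWeight, ← Fin.prod_univ_fun_getElem]
  simp only [Nat.castEmbedding_apply, addLeftEmbedding_apply, hletter _ (Fin.is_lt _)]

variable [DiscreteMeasurableSpace A]

lemma measurable_comp_window [Countable A] {T : Type*} [MeasurableSpace T] (F : List A → T)
    (u : ℤ) (n : ℕ) : Measurable fun x => F (window x u n) := by
  have hF : Measurable fun z : Fin n → A => F (List.ofFn z) := measurable_of_countable _
  have hrestrict : Measurable fun (x : ℤ → A) (i : Fin n) => x (u + (i : ℕ)) :=
    measurable_pi_lambda _ fun i => measurable_pi_apply _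
  have hwindow : ∀ x : ℤ → A, window x u n = List.ofFn fun i : Fin n => x (u + (i : ℕ)) :=
    fun x => by simp [window, List.ofFn_eq_map, ← List.map_coe_finRange_eq_range]
  simp_rw [hwindow]
  exact hF.comp hrestrict

variable [Fintype A]

lemma lintegral_foldl_window (hp : IsProbVector p) (hμ : IsBernoulliMeasure μ p)
    (step : S → A → S) (F : S → ℝ≥0∞) (σ : S) (u : ℤ) (n : ℕ) :
    ∫⁻ x, F ((window x u n).foldl step σ) ∂μ =
      (transition (fun a => ENNReal.ofReal (p a)) step)^[n] F σ := by
  have hsplit : ∀ x, F ((window x u n).foldl step σ) = ∑ w ∈ words A n,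
      {x | window x u n = w}.indicator (fun _ => F (w.foldl step σ)) x := fun x => by
    rw [Finset.sum_eq_single_of_mem (window x u n) (by simp [mem_words, window])
      fun w _ hw => Set.indicator_of_notMem (s := {x | window x u n = w}) hw.symm _]
    simp
  have hmeas : ∀ w : List A, MeasurableSet {x : ℤ → A | window x u n = w} := fun w =>
    measurableSet_setOfPred.2 (measurable_comp_window (· = w) u n)
  simp_rw [hsplit]
  rw [lintegral_finsetSum _ fun w _ => measurable_const.indicator (hmeas w),
    iterate_transition_apply]
  refine Finset.sum_congr rfl fun w hw => ?_
  obtain rfl := mem_words.1 hw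
  rw [lintegral_indicator_const (hmeas w), measure_window_eq hp hμ, mul_comm]

lemma measure_foldl_window (hp : IsProbVector p) (hμ : IsBernoulliMeasure μ p)
    (step : S → A → S) (G : Set S) (δ : ℝ≥0∞) (σ : S) (u : ℤ) (n : ℕ) :
    δ * μ {x | (window x u n).foldl step σ ∈ G} =
      (transition (fun a => ENNReal.ofReal (p a)) step)^[n] (G.indicator fun _ => δ) σ := by
  have hmeas : MeasurableSet {x : ℤ → A | (window x u n).foldl step σ ∈ G} :=
    measurableSet_setOfPred.2 (measurable_comp_window (fun w => w.foldl step σ ∈ G) u n)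
  rw [← lintegral_foldl_window hp hμ, ← lintegral_indicator_const hmeas]
  rfl

end Window

section Recurrence

lemma tendsto_zero_of_mul_le {f : ℕ → ℝ≥0∞} {δ K : ℝ≥0∞} (hδ : δ ≠ 0) (hK : K ≠ ∞)
    (h : ∀ n : ℕ, n * (δ * f n) ≤ K) : Tendsto f atTop (nhds 0) := by
  have hKδ : K / δ ≠ ∞ := ENNReal.div_ne_top hK hδ
  have hlim : Tendsto (fun n : ℕ => K / δ / n) atTop (nhds 0) := by
    simpa using ENNReal.Tendsto.const_div ENNReal.tendsto_nat_nhds_top (Or.inr hKδ)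
  refine tendsto_of_tendsto_of_tendsto_of_le_of_le' tendsto_const_nhds hlim
    (Eventually.of_forall fun _ => bot_le) ?_
  filter_upwards [eventually_ne_atTop 0] with n hn
  rw [ENNReal.le_div_iff_mul_le (Or.inl (by exact_mod_cast hn)) (Or.inr hKδ),
    ENNReal.le_div_iff_mul_le (Or.inl hδ) (Or.inr hK), mul_assoc, mul_comm, mul_assoc]
  exact h n

variable {A S : Type*} [Fintype A] [MeasurableSpace A] [DiscreteMeasurableSpace A]
  {p : A → ℝ} {μ : Measure (ℤ → A)} {step : S → A → S} {bad : Set S} {V : S → ℝ≥0∞} {δ : ℝ≥0∞}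

lemma mul_measure_forall_bad_le (hp : IsProbVector p) (hμ : IsBernoulliMeasure μ p)
    (hV : ∀ σ ∈ bad, transition (fun a => ENNReal.ofReal (p a)) step V σ + δ ≤ V σ)
    (σ : S) (u : ℤ) (n : ℕ) :
    n * (δ * μ {x | ∀ t ≤ n, (window x u t).foldl step σ ∈ bad}) ≤ V σ :=
  calc n * (δ * μ {x | ∀ t ≤ n, (window x u t).foldl step σ ∈ bad})
      ≤ n * (δ * μ {x | (window x u n).foldl (stoppedStep step bad) σ ∈ bad}) := by
        gcongr n * (δ * μ ?_)
        intro x hx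
        rw [Set.mem_ofPred_eq, foldl_stoppedStep_window fun t ht => hx t ht.le]
        exact hx n le_rfl
    _ = (n • (transition (fun a => ENNReal.ofReal (p a)) (stoppedStep step bad))^[n]
          (bad.indicator fun _ => δ)) σ := by
        rw [measure_foldl_window hp hμ, Pi.smul_apply, nsmul_eq_mul]
    _ ≤ V σ := nsmul_iterate_transition_stoppedStep_le hp.sum_ofReal hV n σ

lemma tendsto_measure_forall_bad (hp : IsProbVector p) (hμ : IsBernoulliMeasure μ p)
    (hδ : δ ≠ 0)
    (hV : ∀ σ ∈ bad, transition (fun a => ENNReal.ofReal (p a)) step V σ + δ ≤ V σ)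
    {σ : S} (hσ : V σ ≠ ∞) (u : ℕ → ℤ) :
    Tendsto (fun n => μ {x | ∀ t ≤ n, (window x (u n) t).foldl step σ ∈ bad}) atTop (nhds 0) :=
  tendsto_zero_of_mul_le hδ hσ fun n => mul_measure_forall_bad_le hp hμ hV σ (u n) n

lemma ae_exists_foldl_window_notMem (hp : IsProbVector p) (hμ : IsBernoulliMeasure μ p)
    (hδ : δ ≠ 0)
    (hV : ∀ σ ∈ bad, transition (fun a => ENNReal.ofReal (p a)) step V σ + δ ≤ V σ)
    {σ : S} (hfin : ∀ w : List A, V (w.foldl step σ) ≠ ∞) (u : ℤ) (T : ℕ) :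
    ∀ᵐ x ∂μ, ∃ t ≥ T, (window x u t).foldl step σ ∉ bad := by
  have hnull : μ (⋃ w : List A, {x | ∀ t, (window x (u + T) t).foldl step (w.foldl step σ) ∈ bad})
      = 0 := measure_iUnion_null fun w => nonpos_iff_eq_zero.1 <|
    ge_of_tendsto' (tendsto_measure_forall_bad hp hμ hδ hV (hfin w) fun _ => u + T) fun n =>
      measure_mono fun x hx t _ => hx t
  refine measure_mono_null (fun x hx => Set.mem_iUnion.2 ⟨window x u T, fun t => ?_⟩) hnull
  simp only [Set.mem_compl_iff, Set.mem_ofPred_eq, not_exists, not_and, not_not] at hx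
  rw [← List.foldl_append, ← window_add]
  exact hx (T + t) (by omega)

end Recurrence

section Greedy

variable {I G : Type*} {S : Finset I} {wt : I → ℝ≥0∞} {π : G → ℝ≥0∞} {f f₀ : I → Option G}

open Classical in
/-- The total weight of the items of `S` that `f` sends to `o`: the content of the bin `g` if
`o = some g`, and the rejected weight if `o = none`. -/
def load (S : Finset I) (wt : I → ℝ≥0∞) (f : I → Option G) (o : Option G) : ℝ≥0∞ :=
  ∑ i ∈ S with f i = o, wt i

/-- The items of `S` are put greedily into bins of capacities `π`: a rejected item fits into
no bin. -/
structure IsGreedy (S : Finset I) (wt : I → ℝ≥0∞) (π : G → ℝ≥0∞) (f : I → Option G) : Prop where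
  load_le : ∀ g, load S wt f (some g) ≤ π g
  lt_load_add : ∀ i ∈ S, f i = none → ∀ g, π g < load S wt f (some g) + wt i

lemma load_congr (h : ∀ i ∈ S, f i = f₀ i) (o : Option G) : load S wt f o = load S wt f₀ o := by
  classical
  exact Finset.sum_congr (Finset.filter_congr fun i hi => by rw [h i hi]) fun _ _ => rfl

lemma IsGreedy.congr (hf : IsGreedy S wt π f₀) (h : ∀ i ∈ S, f i = f₀ i) :
    IsGreedy S wt π f where
  load_le g := by simpa only [load_congr h] using hf.load_le g
  lt_load_add i hi hfi g := by
    simpa only [load_congr h] using hf.lt_load_add i hi (h i hi ▸ hfi) g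

lemma load_update_self [DecidableEq I] {i : I} (hi : i ∈ S) (hfi : f i = none) (g : G) :
    load S wt (Function.update f i (some g)) (some g) = load S wt f (some g) + wt i := by
  classical
  have hfilter : {j ∈ S | Function.update f i (some g) j = some g} =
      insert i {j ∈ S | f j = some g} := by
    ext j
    obtain rfl | hj := eq_or_ne j i <;> simp [*]
  unfold load
  convert Finset.sum_insert (f := wt) (s := {j ∈ S | f j = some g}) (a := i) (by simp [hfi])
    using 1
  · rw [← hfilter]
  · rw [add_comm]

lemma load_update_of_ne [DecidableEq I] {i : I} (hfi : f i = none) {g g' : G} (hg : g' ≠ g) :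
    load S wt (Function.update f i (some g)) (some g') = load S wt f (some g') := by
  classical
  refine Finset.sum_congr (Finset.filter_congr fun j _ => ?_) fun _ _ => rfl
  obtain rfl | hj := eq_or_ne j i <;> simp [*, hg.symm]

lemma exists_isGreedy_extending (h₀ : ∀ g, load S wt f₀ (some g) ≤ π g) :
    ∃ f : I → Option G, (∀ i g, f₀ i = some g → f i = some g) ∧ IsGreedy S wt π f := by
  classical
  obtain ⟨f, ⟨hext, hfit⟩, hmin⟩ := exists_minimalFor_of_wellFoundedLT
    (fun f : I → Option G => (∀ i g, f₀ i = some g → f i = some g) ∧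
      ∀ g, load S wt f (some g) ≤ π g)
    (fun f => #{i ∈ S | f i = none}) ⟨f₀, fun _ _ h => h, h₀⟩
  refine ⟨f, hext, hfit, fun i hi hfi g => ?_⟩
  by_contra! hle
  have hadmissible : (∀ j g', f₀ j = some g' → Function.update f i (some g) j = some g') ∧
      ∀ g', load S wt (Function.update f i (some g)) (some g') ≤ π g' := by
    refine ⟨fun j g' hj => ?_, fun g' => ?_⟩
    · obtain rfl | hji := eq_or_ne j i
      · simp [hext j g' hj] at hfi
      · rw [Function.update_of_ne hji, hext j g' hj]
    · obtain rfl | hg := eq_or_ne g' g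
      · rwa [load_update_self hi hfi]
      · rw [load_update_of_ne hfi hg]
        exact hfit g'
  have hfewer : #{j ∈ S | Function.update f i (some g) j = none} < #{j ∈ S | f j = none} := by
    refine Finset.card_lt_card (Finset.ssubset_iff_of_subset (fun j hj => ?_) |>.2
      ⟨i, by simp [hi, hfi]⟩)
    obtain rfl | hji := eq_or_ne j i <;> simp_all
  exact (hmin hadmissible hfewer.le).not_gt hfewer

lemma min_le_rpow_mul_rpow (x y : ℝ≥0∞) {s : ℝ} (hs0 : 0 ≤ s) (hs1 : s ≤ 1) :
    min x y ≤ y ^ s * x ^ (1 - s) :=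
  calc min x y = min x y ^ s * min x y ^ (1 - s) := by
        rw [← ENNReal.rpow_add_of_nonneg _ _ hs0 (sub_nonneg.2 hs1), add_sub_cancel,
          ENNReal.rpow_one]
    _ ≤ y ^ s * x ^ (1 - s) := mul_le_mul'
        (ENNReal.rpow_le_rpow (min_le_right _ _) hs0)
        (ENNReal.rpow_le_rpow (min_le_left _ _) (sub_nonneg.2 hs1))

lemma rpow_mul_load_none_le {c : ℝ≥0∞} (hc : ∀ i ∈ S, f i = none → c ≤ wt i) {s : ℝ}
    (hs : 0 ≤ s) : c ^ s * load S wt f none ≤ ∑ i ∈ S, wt i ^ (1 + s) := by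
  classical
  rw [load, Finset.mul_sum]
  refine (Finset.sum_le_sum fun i hi => ?_).trans
    (Finset.sum_le_sum_of_subset (Finset.filter_subset _ S))
  obtain ⟨hiS, hfi⟩ := Finset.mem_filter.1 hi
  rw [ENNReal.rpow_add_of_nonneg _ _ zero_le_one hs, ENNReal.rpow_one, mul_comm (wt i)]
  gcongr
  exact hc i hiS hfi

variable [Fintype G]

lemma sum_mul_comp (wt : I → ℝ≥0∞) (f : I → Option G) (φ : Option G → ℝ≥0∞) :
    ∑ i ∈ S, wt i * φ (f i) = ∑ o, load S wt f o * φ o := by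
  classical
  simp_rw [load, Finset.sum_mul]
  rw [← Finset.sum_fiberwise S f]
  refine Finset.sum_congr rfl fun o _ => Finset.sum_congr rfl fun i hi => ?_
  rw [(Finset.mem_filter.1 hi).2]

lemma load_none_add_sum_load (wt : I → ℝ≥0∞) (f : I → Option G) :
    load S wt f none + ∑ g, load S wt f (some g) = ∑ i ∈ S, wt i := by
  simpa [Fintype.sum_option] using (sum_mul_comp (S := S) wt f 1).symm

lemma IsGreedy.load_none_le (hf : IsGreedy S wt π f) (hsum : ∑ i ∈ S, wt i = ∑ g, π g)
    (hfin : ∑ g, π g ≠ ∞) {m : I} (hm : m ∈ S) (hfm : f m = none) :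
    load S wt f none ≤ ∑ g, min (π g) (wt m) := by
  have hload : ∑ g, load S wt f (some g) ≠ ∞ :=
    ne_top_of_le_ne_top hfin (Finset.sum_le_sum fun g _ => hf.load_le g)
  refine (ENNReal.add_le_add_iff_right hload).1 ?_
  rw [load_none_add_sum_load, hsum, ← Finset.sum_add_distrib]
  refine Finset.sum_le_sum fun g _ => ?_
  rcases min_choice (π g) (wt m) with h | h <;> rw [h]
  · exact le_self_add
  · rw [add_comm]
    exact (hf.lt_load_add m hm hfm g).le

lemma IsGreedy.sq_load_none_le (hf : IsGreedy S wt π f) (hsum : ∑ i ∈ S, wt i = ∑ g, π g)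
    (hfin : ∑ g, π g ≠ ∞) {s : ℝ} (hs0 : 0 ≤ s) (hs1 : s ≤ 1) :
    load S wt f none ^ 2 ≤ (∑ i ∈ S, wt i ^ (1 + s)) * ∑ g, π g ^ (1 - s) := by
  classical
  obtain hempty | hne := {i ∈ S | f i = none}.eq_empty_or_nonempty
  · simp [load, hempty]
  obtain ⟨m, hm, hmin⟩ := Finset.exists_min_image _ wt hne
  obtain ⟨hmS, hfm⟩ := Finset.mem_filter.1 hm
  have hreject : load S wt f none ≤ wt m ^ s * ∑ g, π g ^ (1 - s) := by
    rw [Finset.mul_sum]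
    exact (hf.load_none_le hsum hfin hmS hfm).trans
      (Finset.sum_le_sum fun g _ => min_le_rpow_mul_rpow _ _ hs0 hs1)
  calc load S wt f none ^ 2
      ≤ load S wt f none * (wt m ^ s * ∑ g, π g ^ (1 - s)) := by
        rw [sq]
        gcongr
    _ = (wt m ^ s * load S wt f none) * ∑ g, π g ^ (1 - s) := by ring
    _ ≤ _ := by
        gcongr
        exact rpow_mul_load_none_le
          (fun i hi hfi => hmin i (Finset.mem_filter.2 ⟨hi, hfi⟩)) hs0

end Greedy

section Entropy

variable {A B : Type*} [Fintype A] [Fintype B] {p : A → ℝ} {q : B → ℝ}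

lemma eventually_lt_of_hasDerivAt_neg {f : ℝ → ℝ} {f' x₀ : ℝ} (h : HasDerivAt f f' x₀)
    (hf' : f' < 0) : ∀ᶠ x in nhdsWithin x₀ (Set.Ioi x₀), f x < f x₀ := by
  have hslope : ∀ᶠ x in nhdsWithin x₀ (Set.Ioi x₀), slope f x₀ x < 0 :=
    (h.tendsto_slope.eventually_lt_const hf').filter_mono
      (nhdsWithin_mono x₀ fun x hx => (Set.mem_Ioi.1 hx).ne')
  filter_upwards [hslope, self_mem_nhdsWithin] with x hx hx₀
  exact (slope_neg_iff_of_le (Set.mem_Ioi.1 hx₀).le).1 hx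

lemma hasDerivAt_sum_rpow (hp : IsProbVector p) (c : ℝ) :
    HasDerivAt (fun s : ℝ => ∑ a, p a ^ (1 + c * s)) (-c * vecEntropy p) 0 := by
  have hterm : ∀ a ∈ univ, HasDerivAt (fun s : ℝ => p a ^ (1 + c * s))
      (Real.log (p a) * c * p a ^ (1 + c * (0 : ℝ))) 0 := fun a _ => by
    refine HasDerivAt.const_rpow (hp.1 a) ?_
    simpa using ((hasDerivAt_id (0 : ℝ)).const_mul c).const_add 1
  refine (HasDerivAt.fun_sum hterm).congr_deriv ?_
  simp only [mul_zero, add_zero, Real.rpow_one, vecEntropy, neg_mul_neg, Finset.mul_sum]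
  exact Finset.sum_congr rfl fun a _ => by ring

lemma exists_sum_rpow_mul_sum_rpow_lt_one (hp : IsProbVector p) (hq : IsProbVector q)
    (hH : vecEntropy q < vecEntropy p) :
    ∃ s : ℝ, 0 < s ∧ s < 1 ∧ (∑ a, p a ^ (1 + s)) * (∑ b, q b ^ (1 - s)) < 1 := by
  have hderiv := (hasDerivAt_sum_rpow hp 1).fun_mul (hasDerivAt_sum_rpow hq (-1))
  have hev := eventually_lt_of_hasDerivAt_neg hderiv (by simpa [hp.2, hq.2] using hH)
  have hlt : ∀ᶠ s : ℝ in nhdsWithin 0 (Set.Ioi 0), s < 1 :=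
    (eventually_lt_nhds one_pos).filter_mono nhdsWithin_le_nhds
  obtain ⟨s, ⟨hs, hs1⟩, hs0⟩ := ((hev.and hlt).and self_mem_nhdsWithin).exists
  exact ⟨s, hs0, hs1, by simpa [hp.2, hq.2, ← sub_eq_add_neg] using hs⟩

lemma exists_rpow_mul_le_one {a b : ℝ} (ha : 0 < a) (hab : a * b < 1) :
    ∃ ρ : ℝ, 0 < ρ ∧ ρ < 1 ∧ a ^ ρ * b ≤ 1 := by
  have hcont : Continuous fun ρ : ℝ => a ^ ρ * b :=
    (Real.continuous_const_rpow ha.ne').mul continuous_const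
  have hev : ∀ᶠ ρ in nhds (1 : ℝ), a ^ ρ * b < 1 :=
    hcont.continuousAt.eventually_lt continuousAt_const (by simpa using hab)
  obtain ⟨ρ, ⟨h, h0⟩, h1⟩ :=
    (((hev.and (eventually_gt_nhds one_pos)).filter_mono nhdsWithin_le_nhds).and
      (self_mem_nhdsWithin (s := Set.Iio (1 : ℝ)))).exists
  exact ⟨ρ, h0, h1, h.le⟩

lemma sum_ofReal_rpow (hp : IsProbVector p) (s : ℝ) :
    ∑ a, ENNReal.ofReal (p a) ^ s = ENNReal.ofReal (∑ a, p a ^ s) := by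
  rw [ENNReal.ofReal_sum_of_nonneg fun a _ => Real.rpow_nonneg (hp.1 a).le _]
  exact Finset.sum_congr rfl fun a _ => ENNReal.ofReal_rpow_of_pos (hp.1 a)

lemma one_le_sum_rpow (hq : IsProbVector q) {s : ℝ} (hs : s ≤ 1) : 1 ≤ ∑ b, q b ^ s :=
  hq.2.ge.trans (Finset.sum_le_sum fun b _ => by
    simpa using Real.rpow_le_rpow_of_exponent_ge (hq.1 b) (hq.le_one b) hs)

lemma exists_sum_rpow_rpow_mul_sum_rpow_le_one (hp : IsProbVector p) (hq : IsProbVector q)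
    (hH : vecEntropy q < vecEntropy p) :
    ∃ s ρ : ℝ, 0 < s ∧ s < 1 ∧ 0 < ρ ∧ ρ < 1 ∧
      ∑ a, ENNReal.ofReal (p a) ^ (1 + s) < 1 ∧
      (∑ a, ENNReal.ofReal (p a) ^ (1 + s)) ^ ρ * ∑ b, ENNReal.ofReal (q b) ^ (1 - s) ≤ 1 := by
  obtain ⟨s, hs0, hs1, hs⟩ := exists_sum_rpow_mul_sum_rpow_lt_one hp hq hH
  have := hp.nonempty
  have hx0 : 0 < ∑ a, p a ^ (1 + s) :=
    Finset.sum_pos (fun a _ => Real.rpow_pos_of_pos (hp.1 a) _) Finset.univ_nonempty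
  have hx1 : ∑ a, p a ^ (1 + s) < 1 := by
    nlinarith [one_le_sum_rpow hq (s := 1 - s) (by linarith)]
  obtain ⟨ρ, hρ0, hρ1, hρ⟩ := exists_rpow_mul_le_one hx0 hs
  refine ⟨s, ρ, hs0, hs1, hρ0, hρ1, ?_, ?_⟩ <;> rw [sum_ofReal_rpow hp]
  · rwa [ENNReal.ofReal_lt_one]
  · rw [sum_ofReal_rpow hq, ENNReal.ofReal_rpow_of_pos hx0, ← ENNReal.ofReal_mul (by positivity)]
    exact ENNReal.ofReal_le_one.2 hρ

end Entropy

section GeometricTail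

variable {x y : ℝ≥0∞} {ρ : ℝ} {n : ℕ}

lemma le_rpow_pow_of_sq_le {u : ℝ≥0∞} {N i : ℕ} (hx : x ≤ 1) (hxy : x ^ ρ * y ≤ 1)
    (hN : ρ * n ≤ N) (hu : u ^ 2 ≤ x ^ (i + N) * y ^ n) : u ≤ (x ^ (2⁻¹ : ℝ)) ^ i := by
  have hpow : x ^ N ≤ (x ^ ρ) ^ n := by
    rw [← ENNReal.rpow_natCast x, ← ENNReal.rpow_natCast, ← ENNReal.rpow_mul]
    exact ENNReal.rpow_le_rpow_of_exponent_ge hx hN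
  have hsqrt : (x ^ (2⁻¹ : ℝ)) ^ 2 = x := by
    rw [← ENNReal.rpow_natCast, ← ENNReal.rpow_mul]
    norm_num
  refine (ENNReal.pow_le_pow_left_iff two_ne_zero).1 ?_
  calc u ^ 2 ≤ x ^ i * (x ^ N * y ^ n) := by rwa [← mul_assoc, ← pow_add]
    _ ≤ x ^ i * (x ^ ρ * y) ^ n := by rw [mul_pow]; gcongr
    _ ≤ x ^ i := mul_le_of_le_one_right' (pow_le_one₀ bot_le hxy)
    _ = ((x ^ (2⁻¹ : ℝ)) ^ i) ^ 2 := by rw [pow_right_comm, hsqrt]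

lemma tsum_le_of_sq_le (hρ : 0 ≤ ρ) (hx : x ≤ 1) (hxy : x ^ ρ * y ≤ 1) {U : ℕ → ℝ≥0∞}
    (hU1 : ∀ t, U t ≤ 1) (hU : ∀ t, U t ^ 2 ≤ x ^ t * y ^ n) :
    ∑' t, U t ≤ ENNReal.ofReal ρ * n + (1 + (1 - x ^ (2⁻¹ : ℝ))⁻¹) := by
  set N := ⌈ρ * n⌉₊
  have hhead : ∑ t ∈ range N, U t ≤ ENNReal.ofReal ρ * n + 1 :=
    calc ∑ t ∈ range N, U t ≤ ∑ t ∈ range N, 1 := Finset.sum_le_sum fun t _ => hU1 t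
      _ = ENNReal.ofReal N := by simp
      _ ≤ ENNReal.ofReal (ρ * n + 1) :=
        ENNReal.ofReal_le_ofReal (Nat.ceil_lt_add_one (by positivity)).le
      _ = ENNReal.ofReal ρ * n + 1 := by
        rw [ENNReal.ofReal_add (by positivity) zero_le_one, ENNReal.ofReal_mul hρ,
          ENNReal.ofReal_one, ENNReal.ofReal_natCast]
  have htail : ∑' i, U (i + N) ≤ (1 - x ^ (2⁻¹ : ℝ))⁻¹ := by
    rw [← ENNReal.tsum_geometric]
    exact ENNReal.tsum_le_tsum fun i => le_rpow_pow_of_sq_le hx hxy (Nat.le_ceil _) (hU _)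
  calc ∑' t, U t = ∑ t ∈ range N, U t + ∑' i, U (i + N) :=
        (ENNReal.summable.sum_add_tsum_nat_add' (f := U)).symm
    _ ≤ (ENNReal.ofReal ρ * n + 1) + (1 - x ^ (2⁻¹ : ℝ))⁻¹ := add_le_add hhead htail
    _ = _ := add_assoc _ _ _

end GeometricTail

section GreedyDecoder

variable {A G : Type*} [Fintype A] {P : A → ℝ≥0∞} {π : G → ℝ≥0∞}

lemma load_comp_tail (hP : ∑ a, P a = 1) (f : List A → Option G) (t : ℕ) (o : Option G) :
    load (words A (t + 1)) (wordWeight P) (fun w => f w.tail) o =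
      load (words A t) (wordWeight P) f o := by
  classical
  simp only [load, Finset.sum_filter, sum_words_succ, List.tail_cons, wordWeight_cons]
  refine Finset.sum_congr rfl fun w _ => ?_
  split_ifs
  · rw [← Finset.sum_mul, hP, one_mul]
  · simp

lemma exists_isGreedy_succ (hP : ∑ a, P a = 1) {t : ℕ} {f : List A → Option G}
    (hf : IsGreedy (words A t) (wordWeight P) π f) :
    ∃ f' : List A → Option G, IsGreedy (words A (t + 1)) (wordWeight P) π f' ∧
      ∀ a w g, f w = some g → f' (a :: w) = some g := by
  obtain ⟨f', hext, hf'⟩ := exists_isGreedy_extending (S := words A (t + 1))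
    (wt := wordWeight P) (f₀ := fun w => f w.tail) fun g =>
      (load_comp_tail hP f t (some g)).trans_le (hf.load_le g)
  exact ⟨f', hf', fun a w g hw => hext (a :: w) g hw⟩

/-- Words are read with the latest letter first, so that `a :: w` prolongs `w`. -/
lemma exists_greedy_decoder (hP : ∑ a, P a = 1) (π : G → ℝ≥0∞) :
    ∃ f : List A → Option G, (∀ a w g, f w = some g → f (a :: w) = some g) ∧
      ∀ t, IsGreedy (words A t) (wordWeight P) π f := by
  obtain ⟨f₀, -, hf₀⟩ := exists_isGreedy_extending (S := words A 0) (wt := wordWeight P)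
    (π := π) (f₀ := fun _ => none) fun g => by simp [load]
  choose! next hnext hext using fun (t : ℕ) (f : List A → Option G)
    (hf : IsGreedy (words A t) (wordWeight P) π f) => exists_isGreedy_succ hP hf
  let F : ℕ → List A → Option G := fun t => Nat.rec f₀ next t
  have hF : ∀ t, IsGreedy (words A t) (wordWeight P) π (F t) := fun t => by
    induction t with
    | zero => exact hf₀
    | succ t ih => exact hnext t (F t) ih
  refine ⟨fun w => F w.length w, fun a w g hw => hext _ _ (hF _) a w g hw, fun t => ?_⟩
  exact (hF t).congr fun w hw => by rw [mem_words.1 hw]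

end GreedyDecoder

section Decoder

variable {A B : Type*}

lemma sum_prod_rpow [Fintype B] (Q : B → ℝ≥0∞) {s : ℝ} (hs : 0 ≤ s) (n : ℕ) :
    ∑ g : Fin n → B, (∏ i, Q (g i)) ^ s = (∑ b, Q b ^ s) ^ n := by
  simp_rw [Fintype.sum_pow, ENNReal.prod_rpow_of_nonneg hs]

/-- A decoder turns a stream of letters of `A` into words over `B` of any prescribed length.
The letters read so far are listed with the latest one first, `none` asks for further letters,
and an answer is never revised. -/
structure Decoder (A B : Type*) where
  /-- The word of length `n` decoded from the letters read so far. -/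
  decode : ∀ n : ℕ, List A → Option (Fin n → B)
  decode_cons : ∀ {n a w g}, decode n w = some g → decode n (a :: w) = some g

namespace Decoder

variable [Fintype A] {P : A → ℝ≥0∞} {Q : B → ℝ≥0∞}

/-- From independent letters of law `P` the decoder never produces a word with a probability
larger than its probability for independent letters of law `Q`. -/
def Simulates (D : Decoder A B) (P : A → ℝ≥0∞) (Q : B → ℝ≥0∞) : Prop :=
  ∀ n t (g : Fin n → B),
    load (words A t) (wordWeight P) (D.decode n) (some g) ≤ ∏ i, Q (g i)

/-- The indicator function of the words from which no word of length `n` is decoded yet. -/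
def undecided (D : Decoder A B) (n : ℕ) : List A → ℝ≥0∞ :=
  {w | D.decode n w = none}.indicator 1

/-- The mean number of letters still to be read, after `w`, until a word of length `n` is
decoded. -/
def remaining (D : Decoder A B) (P : A → ℝ≥0∞) (n : ℕ) (w : List A) : ℝ≥0∞ :=
  ∑' t, (transition P fun w a => a :: w)^[t] (D.undecided n) w

lemma iterate_transition_undecided_nil (D : Decoder A B) (n t : ℕ) :
    (transition P fun w a => a :: w)^[t] (D.undecided n) [] =
      load (words A t) (wordWeight P) (D.decode n) none := by
  classical
  simp [iterate_transition_cons_nil, undecided, load, Finset.sum_filter, Set.indicator_apply]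

variable [Fintype B]

lemma remaining_nil_le {D : Decoder A B} {n : ℕ} (hP : ∑ a, P a = 1) (hQ : ∑ b, Q b = 1)
    (hD : ∀ t, IsGreedy (words A t) (wordWeight P) (fun g => ∏ i, Q (g i)) (D.decode n))
    {s ρ : ℝ} (hs0 : 0 ≤ s) (hs1 : s ≤ 1) (hρ : 0 ≤ ρ) (hx : ∑ a, P a ^ (1 + s) ≤ 1)
    (hxy : (∑ a, P a ^ (1 + s)) ^ ρ * ∑ b, Q b ^ (1 - s) ≤ 1) :
    D.remaining P n [] ≤
      ENNReal.ofReal ρ * n + (1 + (1 - (∑ a, P a ^ (1 + s)) ^ (2⁻¹ : ℝ))⁻¹) := by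
  have hπ : ∑ g : Fin n → B, ∏ i, Q (g i) = 1 := by
    rw [← Fintype.sum_pow, hQ, one_pow]
  simp_rw [remaining, iterate_transition_undecided_nil]
  refine tsum_le_of_sq_le hρ hx hxy (fun t => ?_) fun t => ?_
  · rw [← sum_wordWeight hP t, ← load_none_add_sum_load _ (D.decode n)]
    exact le_self_add
  · rw [← sum_wordWeight_rpow P (by linarith), ← sum_prod_rpow Q (sub_nonneg.2 hs1)]
    exact (hD t).sq_load_none_le ((sum_wordWeight hP t).trans hπ.symm)
      (hπ ▸ ENNReal.one_ne_top) hs0 hs1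

end Decoder

lemma exists_decoder [Fintype A] [Fintype B] {p : A → ℝ} {q : B → ℝ} (hp : IsProbVector p)
    (hq : IsProbVector q) (hH : vecEntropy q < vecEntropy p) :
    ∃ (D : Decoder A B) (ρ C : ℝ≥0∞), ρ < 1 ∧ C ≠ ∞ ∧
      D.Simulates (fun a => ENNReal.ofReal (p a)) (fun b => ENNReal.ofReal (q b)) ∧
      ∀ n, D.remaining (fun a => ENNReal.ofReal (p a)) n [] ≤ ρ * n + C := by
  obtain ⟨s, ρ, hs0, hs1, hρ0, hρ1, hx, hxy⟩ :=
    exists_sum_rpow_rpow_mul_sum_rpow_le_one hp hq hH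
  choose decode hcons hgreedy using fun n => exists_greedy_decoder hp.sum_ofReal
    fun g : Fin n → B => ∏ i, ENNReal.ofReal (q (g i))
  refine ⟨⟨decode, hcons _ _ _ _⟩, ENNReal.ofReal ρ, _, ENNReal.ofReal_lt_one.2 hρ1, ?_,
    fun n t => (hgreedy n t).load_le, fun n => Decoder.remaining_nil_le hp.sum_ofReal
      hq.sum_ofReal (hgreedy n) hs0.le hs1.le hρ0.le hx.le hxy⟩
  refine ENNReal.add_ne_top.2 ⟨ENNReal.one_ne_top, ENNReal.inv_ne_top.2 ?_⟩
  exact (tsub_pos_of_lt (ENNReal.rpow_lt_one hx (by norm_num))).ne'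

end Decoder

section Jobs

variable {A B : Type*}

/-- The task of decoding a word of length `size` from the letters `read`, latest first, which
have been allotted to it so far. -/
structure Job (A : Type*) where
  /-- The length of the word to be decoded. -/
  size : ℕ
  /-- The letters already allotted to the job. -/
  read : List A

/-- The total number of output letters promised by a stack of jobs. -/
def jobsLen (l : List (Job A)) : ℕ := (l.map Job.size).sum

lemma jobsLen_cons (j : Job A) (l : List (Job A)) : jobsLen (j :: l) = j.size + jobsLen l := by
  simp [jobsLen]

lemma jobsLen_append (l o : List (Job A)) : jobsLen (l ++ o) = jobsLen l + jobsLen o := by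
  simp [jobsLen]

/-- Some job of the stack is not finished. -/
def HasPending (D : Decoder A B) (l : List (Job A)) : Prop :=
  ∃ j ∈ l, D.decode j.size j.read = none

/-- The stack after one more letter, which is given to the topmost unfinished job. -/
def feed (D : Decoder A B) : List (Job A) → A → List (Job A)
  | [], _ => []
  | j :: l, x =>
    if (D.decode j.size j.read).isNone then ⟨j.size, x :: j.read⟩ :: l else j :: feed D l x

/-- The letter `b` is decoded at place `k` of the output of a stack of jobs. The output starts
with the word of the job at the bottom of the stack, which is the end of the list. -/
inductive IsOutput (D : Decoder A B) : List (Job A) → ℕ → B → Prop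
  | older {j l k b} (h : IsOutput D l k b) : IsOutput D (j :: l) k b
  | newest {j l g} (h : D.decode j.size j.read = some g) (i : Fin j.size) :
      IsOutput D (j :: l) (jobsLen l + i) (g i)

variable {D : Decoder A B} {j : Job A} {l o : List (Job A)} {k : ℕ} {b c : B}

lemma feed_cons_of_eq_none (h : D.decode j.size j.read = none) (x : A) :
    feed D (j :: l) x = ⟨j.size, x :: j.read⟩ :: l := by
  simp [feed, h]

lemma feed_cons_of_ne_none (h : D.decode j.size j.read ≠ none) (x : A) :
    feed D (j :: l) x = j :: feed D l x := by
  simp [feed, h]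

lemma jobsLen_feed (D : Decoder A B) (l : List (Job A)) (x : A) :
    jobsLen (feed D l x) = jobsLen l := by
  induction l with
  | nil => rfl
  | cons j l ih => by_cases h : D.decode j.size j.read = none <;> simp_all [feed, jobsLen]

lemma exists_feed_append (D : Decoder A B) (l o : List (Job A)) (x : A) :
    ∃ o', jobsLen o' = jobsLen o ∧ feed D (l ++ o) x = feed D l x ++ o' := by
  induction l with
  | nil => exact ⟨feed D o x, jobsLen_feed D o x, rfl⟩
  | cons j l ih =>
    by_cases h : D.decode j.size j.read = none
    · exact ⟨o, rfl, by simp [feed, h]⟩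
    · simpa [feed, h] using ih

namespace IsOutput

lemma lt_jobsLen (h : IsOutput D l k b) : k < jobsLen l := by
  induction h with
  | older _ ih => rw [jobsLen_cons]; omega
  | newest _ i => rw [jobsLen_cons]; omega

lemma of_cons (h : IsOutput D (j :: l) k b) (hk : k < jobsLen l) : IsOutput D l k b := by
  cases h with
  | older h => exact h
  | newest _ i => omega

lemma exists_decode (i : Fin j.size) (h : IsOutput D (j :: l) (jobsLen l + i) b) :
    ∃ g, D.decode j.size j.read = some g ∧ g i = b := by
  generalize hk : jobsLen l + (i : ℕ) = k at h
  cases h with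
  | older h => exact absurd h.lt_jobsLen (by omega)
  | @newest _ _ g hg i' => exact ⟨g, hg, congrArg g (Fin.ext (by omega))⟩

lemma unique (hb : IsOutput D l k b) (hc : IsOutput D l k c) : b = c := by
  induction hb with
  | older hb ih => exact ih (hc.of_cons hb.lt_jobsLen)
  | newest hg i =>
    obtain ⟨g', hg', rfl⟩ := hc.exists_decode i
    rw [Option.some_injective _ (hg.symm.trans hg')]

lemma feed (h : IsOutput D l k b) (x : A) : IsOutput D (feed D l x) k b := by
  induction h with
  | @older j l k b h ih =>
    by_cases hj : D.decode j.size j.read = none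
    · rw [feed_cons_of_eq_none hj]
      exact older h
    · rw [feed_cons_of_ne_none hj]
      exact older ih
  | @newest j l g h i =>
    rw [feed_cons_of_ne_none (by simp [h]), ← jobsLen_feed D l x]
    exact newest h i

end IsOutput

lemma isOutput_append_iff :
    IsOutput D (l ++ o) (jobsLen o + k) b ↔ IsOutput D l k b := by
  constructor
  · intro h
    induction l with
    | nil => exact absurd h.lt_jobsLen (by simp)
    | cons j l ih =>
      generalize hm : jobsLen o + k = m at h
      cases h with
      | older h => exact .older (ih (hm ▸ h))
      | newest hg i =>
        rw [List.append_eq, jobsLen_append] at hm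
        obtain rfl : k = jobsLen l + i := by omega
        exact .newest hg i
  · intro h
    induction h with
    | older _ ih => exact .older ih
    | newest hg i =>
      rw [← add_assoc, add_comm (jobsLen o), ← jobsLen_append]
      exact .newest hg i

lemma exists_isOutput (hk : k < jobsLen l) (h : ¬ HasPending D l) : ∃ b, IsOutput D l k b := by
  induction l with
  | nil => simp [jobsLen] at hk
  | cons j l ih =>
    simp only [HasPending, List.mem_cons, not_exists, not_and, forall_eq_or_imp] at h ih
    rcases lt_or_ge k (jobsLen l) with hkl | hkl
    · obtain ⟨b, hb⟩ := ih hkl h.2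
      exact ⟨b, .older hb⟩
    · obtain ⟨i, rfl⟩ := Nat.exists_eq_add_of_le hkl
      obtain ⟨g, hg⟩ := Option.ne_none_iff_exists'.1 h.1
      rw [jobsLen_cons] at hk
      exact ⟨g ⟨i, by omega⟩, .newest hg ⟨i, by omega⟩⟩

end Jobs

/-- `x` has a marker that ends just before position `v`. -/
def IsMarker {A : Type*} (a : A) (r : ℕ) (x : ℤ → A) (v : ℤ) : Prop :=
  ∀ i, v - (r + 1) ≤ i → i < v → x i = a

/-- The state of the coding machine, which cuts the input at its markers and hands the decoder
a job for every stretch between consecutive markers. -/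
structure Machine (A : Type*) where
  /-- One less than the number of marker letters missing for the next marker. -/
  gap : ℕ
  /-- The number of letters read since the last marker. -/
  age : ℕ
  /-- The stack of jobs, the newest one first. -/
  jobs : List (Job A)

namespace Machine

variable {A B : Type*}

/-- The state at a marker, with no jobs to do. -/
def start : Machine A := ⟨0, 0, []⟩

open Classical in
/-- The transition of the coding machine. A marker is a run of `r + 1` letters `a`; its last
letter creates a job which has to fill all the positions read since the preceding marker. -/
def step (D : Decoder A B) (a : A) (r : ℕ) (σ : Machine A) (x : A) : Machine A :=
  if x = a then
    if σ.gap = 0 then ⟨0, 0, ⟨σ.age + 1, []⟩ :: feed D σ.jobs x⟩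
    else ⟨σ.gap - 1, σ.age + 1, feed D σ.jobs x⟩
  else ⟨r, σ.age + 1, feed D σ.jobs x⟩

/-- The state of the machine started at position `u` of `x` after reading `n` letters. -/
def state (D : Decoder A B) (a : A) (r : ℕ) (x : ℤ → A) (u : ℤ) (n : ℕ) : Machine A :=
  (window x u n).foldl (step D a r) start

variable {D : Decoder A B} {a : A} {r : ℕ} {σ τ : Machine A} {x : ℤ → A} {u : ℤ}
  {c n k : ℕ} {b : B}

lemma age_add_jobsLen_step (D : Decoder A B) (a : A) (r : ℕ) (σ : Machine A) (x : A) :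
    (σ.step D a r x).age + jobsLen (σ.step D a r x).jobs = σ.age + jobsLen σ.jobs + 1 := by
  unfold step
  split_ifs <;> simp only [jobsLen_cons, jobsLen_feed] <;> omega

lemma age_add_jobsLen_state (D : Decoder A B) (a : A) (r : ℕ) (x : ℤ → A) (u : ℤ) (n : ℕ) :
    (state D a r x u n).age + jobsLen (state D a r x u n).jobs = n := by
  induction n with
  | zero => rfl
  | succ n ih =>
    rw [state, window_succ, List.foldl_append]
    exact (age_add_jobsLen_step ..).trans (congrArg (· + 1) ih)

lemma jobsLen_le_step (D : Decoder A B) (a : A) (r : ℕ) (σ : Machine A) (x : A) :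
    jobsLen σ.jobs ≤ jobsLen (σ.step D a r x).jobs := by
  unfold step
  split_ifs <;> simp only [jobsLen_cons, jobsLen_feed] <;> omega

lemma monotone_jobsLen_state : Monotone fun n => jobsLen (state D a r x u n).jobs :=
  monotone_nat_of_le_succ fun n => by
    rw [state, state, window_succ, List.foldl_append]
    exact jobsLen_le_step ..

lemma gap_step_le (h : σ.gap ≤ r) (x : A) : (σ.step D a r x).gap ≤ r := by
  unfold step
  split_ifs <;> dsimp only <;> omega

lemma gap_state_le : (state D a r x u n).gap ≤ r := by
  induction n with
  | zero => exact r.zero_le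
  | succ n ih =>
    rw [state, window_succ, List.foldl_append]
    exact gap_step_le ih _

lemma foldl_step_replicate (h : σ.gap ≤ n) :
    ((List.replicate (n + 1) a).foldl (step D a r) σ).gap = 0 ∧
      ((List.replicate (n + 1) a).foldl (step D a r) σ).age = 0 := by
  induction n generalizing σ with
  | zero => simp [step, Nat.le_zero.1 h]
  | succ n ih =>
    rw [List.replicate_succ, List.foldl_cons]
    refine ih ?_
    rw [step, if_pos rfl]
    split_ifs <;> dsimp only <;> omega

lemma state_of_isMarker (h : IsMarker a r x (u + n)) :
    (state D a r x u n).gap = 0 ∧ (state D a r x u n).age = 0 := by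
  rcases lt_or_ge n (r + 1) with hn | hn
  · cases n with
    | zero => exact ⟨rfl, rfl⟩
    | succ n =>
      rw [state, window_eq_replicate fun i h1 h2 => h i (by push_cast; omega) h2]
      exact foldl_step_replicate n.zero_le
  · obtain ⟨t, rfl⟩ := Nat.exists_eq_add_of_le' hn
    have hmarker : window x (u + t) (r + 1) = List.replicate (r + 1) a :=
      window_eq_replicate fun i h1 h2 => h i (by push_cast; omega) (by push_cast at h2 ⊢; omega)
    rw [state, window_add, List.foldl_append, hmarker]
    exact foldl_step_replicate gap_state_le

lemma jobsLen_state_of_isMarker (h : IsMarker a r x (u + n)) :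
    jobsLen (state D a r x u n).jobs = n := by
  simpa [(state_of_isMarker h).2] using age_add_jobsLen_state D a r x u n

/-- The states `σ` and `τ` differ by older jobs of `τ`, which promise `c` output letters. -/
structure Prolongs (c : ℕ) (σ τ : Machine A) : Prop where
  gap_eq : τ.gap = σ.gap
  age_eq : τ.age = σ.age
  jobs_eq : ∃ o, jobsLen o = c ∧ τ.jobs = σ.jobs ++ o

lemma Prolongs.step (h : Prolongs c σ τ) (x : A) :
    Prolongs c (σ.step D a r x) (τ.step D a r x) := by
  obtain ⟨hgap, hage, o, rfl, hjobs⟩ := h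
  obtain ⟨o', ho', hfeed⟩ := exists_feed_append D σ.jobs o x
  unfold Machine.step
  rw [hgap, hage, hjobs, hfeed]
  split_ifs <;> exact ⟨rfl, rfl, o', ho', rfl⟩

lemma Prolongs.foldl (h : Prolongs c σ τ) (w : List A) :
    Prolongs c (w.foldl (Machine.step D a r) σ) (w.foldl (Machine.step D a r) τ) := by
  induction w generalizing σ τ with
  | nil => exact h
  | cons x _ ih => exact ih (h.step x)

lemma Prolongs.isOutput_iff (h : Prolongs c σ τ) :
    IsOutput D τ.jobs (c + k) b ↔ IsOutput D σ.jobs k b := by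
  obtain ⟨o, rfl, hjobs⟩ := h.jobs_eq
  rw [hjobs, isOutput_append_iff]

lemma isOutput_state_add_iff (h : IsMarker a r x (u + n)) (t k : ℕ) :
    IsOutput D (state D a r x u (n + t)).jobs (n + k) b ↔
      IsOutput D (state D a r x (u + n) t).jobs k b := by
  have hstart : Prolongs n start (state D a r x u n) :=
    ⟨(state_of_isMarker h).1, (state_of_isMarker h).2, _, jobsLen_state_of_isMarker h, rfl⟩
  rw [state, window_add, List.foldl_append]
  exact (hstart.foldl _).isOutput_iff

lemma isOutput_step (h : IsOutput D σ.jobs k b) (x : A) :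
    IsOutput D (σ.step D a r x).jobs k b := by
  unfold step
  split_ifs
  exacts [.older (h.feed x), h.feed x, h.feed x]

lemma isOutput_state_mono {m : ℕ} (hmn : m ≤ n) (h : IsOutput D (state D a r x u m).jobs k b) :
    IsOutput D (state D a r x u n).jobs k b := by
  induction n, hmn using Nat.le_induction with
  | base => exact h
  | succ n _ ih =>
    rw [state, window_succ, List.foldl_append]
    exact isOutput_step ih _

end Machine

section Markers

variable {A : Type*} {a : A} {r : ℕ}

lemma sum_mul_ite_eq [Fintype A] [DecidableEq A] {P : A → ℝ≥0∞} (hP : ∑ a, P a = 1) (a : A)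
    (c e : ℝ≥0∞) : ∑ x, P x * (if x = a then c else e) = P a * c + (1 - P a) * e := by
  have hPa : P a ≠ ∞ :=
    ENNReal.sum_ne_top.1 (hP ▸ ENNReal.one_ne_top) a (Finset.mem_univ a)
  rw [← hP, ← Finset.add_sum_erase _ P (Finset.mem_univ a), ENNReal.add_sub_cancel_left hPa,
    ← Finset.add_sum_erase _ _ (Finset.mem_univ a), if_pos rfl, Finset.sum_mul]
  congr 1
  exact Finset.sum_congr rfl fun x hx => by rw [if_neg (Finset.ne_of_mem_erase hx)]

lemma one_sub_mul_geom_sum_add_pow {α : ℝ≥0∞} (hα : α ≤ 1) (n : ℕ) :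
    (1 - α) * ∑ i ∈ range n, α ^ i + α ^ n = 1 := by
  induction n with
  | zero => simp
  | succ n ih =>
    calc (1 - α) * ∑ i ∈ range (n + 1), α ^ i + α ^ (n + 1)
        = (1 - α) * ∑ i ∈ range n, α ^ i + α ^ n * (1 - α + α) := by
          rw [Finset.sum_range_succ, pow_succ]
          ring
      _ = 1 := by rw [tsub_add_cancel_of_le hα, mul_one, ih]

open Classical in
/-- The update, on reading `x`, of the number of marker letters missing for a marker. -/
def countdown (a : A) (r c : ℕ) (x : A) : ℕ := if x = a then c - 1 else r + 1

lemma countdown_window_spec (a : A) (r : ℕ) (x : ℤ → A) (u : ℤ) (n : ℕ) :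
    (window x u n).foldl (countdown a r) (r + 1) ≤ r + 1 ∧
      ∀ i, u + n - (r + 1) + (window x u n).foldl (countdown a r) (r + 1) ≤ i → i < u + n →
        x i = a := by
  induction n with
  | zero => exact ⟨le_rfl, fun i h1 h2 => by simp [window_zero] at h1 h2; omega⟩
  | succ n ih =>
    rw [window_succ, List.foldl_append]
    generalize (window x u n).foldl (countdown a r) (r + 1) = c at ih ⊢
    obtain ⟨hc, hlast⟩ := ih
    simp only [List.foldl_cons, List.foldl_nil, countdown]
    split_ifs with hx
    · refine ⟨by omega, fun i h1 h2 => ?_⟩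
      rcases eq_or_ne i (u + n) with rfl | hi
      exacts [hx, hlast i (by omega) (by omega)]
    · exact ⟨le_rfl, fun i h1 h2 => by push_cast at h1 h2; omega⟩

lemma isMarker_of_countdown_window_eq_zero {x : ℤ → A} {u : ℤ} {n : ℕ}
    (h : (window x u n).foldl (countdown a r) (r + 1) = 0) : IsMarker a r x (u + n) :=
  fun i h1 h2 => (countdown_window_spec a r x u n).2 i (by rw [h]; omega) h2

lemma transition_countdown_add [Fintype A] {P : A → ℝ≥0∞} (hP : ∑ a, P a = 1) {c : ℕ}
    (hc : c ≠ 0) :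
    transition P (countdown a r) (fun c => ∑ i ∈ range c, P a ^ i) c + P a ^ (r + 1) =
      ∑ i ∈ range c, P a ^ i := by
  classical
  have hPa : P a ≤ 1 := hP ▸ Finset.single_le_sum (fun _ _ => bot_le) (Finset.mem_univ a)
  obtain ⟨d, rfl⟩ := Nat.exists_eq_succ_of_ne_zero hc
  have hcountdown : ∀ x, ∑ i ∈ range (countdown a r d.succ x), P a ^ i =
      if x = a then ∑ i ∈ range d, P a ^ i else ∑ i ∈ range (r + 1), P a ^ i := fun x => by
    unfold countdown
    split_ifs <;> rfl
  simp only [transition, hcountdown]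
  rw [sum_mul_ite_eq hP, add_assoc, one_sub_mul_geom_sum_add_pow hPa, Finset.sum_range_succ',
    pow_zero, Finset.mul_sum]
  simp only [pow_succ']

variable [Fintype A] [MeasurableSpace A] [DiscreteMeasurableSpace A] {p : A → ℝ}
  {μ : Measure (ℤ → A)}

lemma tendsto_measure_forall_not_isMarker (hp : IsProbVector p) (hμ : IsBernoulliMeasure μ p)
    (a : A) (r : ℕ) (u : ℕ → ℤ) :
    Tendsto (fun n => μ {x | ∀ v, u n ≤ v → v ≤ u n + n → ¬ IsMarker a r x v}) atTop
      (nhds 0) := by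
  have hlim := tendsto_measure_forall_bad hp hμ (bad := {c | c ≠ 0}) (σ := r + 1)
    (pow_ne_zero (r + 1) (ENNReal.ofReal_pos.2 (hp.1 a)).ne')
    (fun c hc => (transition_countdown_add hp.sum_ofReal hc).le)
    (ENNReal.sum_ne_top.2 fun _ _ => ENNReal.pow_ne_top ENNReal.ofReal_ne_top) u
  refine tendsto_of_tendsto_of_tendsto_of_le_of_le tendsto_const_nhds hlim (fun _ => bot_le)
    fun n => measure_mono fun x hx t ht h => hx _ ?_ ?_ (isMarker_of_countdown_window_eq_zero h)
  all_goals omega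

lemma ae_exists_isMarker_ge (hp : IsProbVector p) (hμ : IsBernoulliMeasure μ p) (a : A)
    (r : ℕ) (u : ℤ) : ∀ᵐ x ∂μ, ∃ v ≥ u, IsMarker a r x v := by
  refine le_antisymm (ge_of_tendsto' (tendsto_measure_forall_not_isMarker hp hμ a r fun _ => u)
    fun n => measure_mono fun x hx v h1 _ hv => ?_) bot_le
  exact hx ⟨v, h1, hv⟩

lemma ae_exists_isMarker_le (hp : IsProbVector p) (hμ : IsBernoulliMeasure μ p) (a : A)
    (r : ℕ) (u : ℤ) : ∀ᵐ x ∂μ, ∃ v ≤ u, IsMarker a r x v := by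
  refine le_antisymm (ge_of_tendsto'
    (tendsto_measure_forall_not_isMarker hp hμ a r fun n => u - n)
    fun n => measure_mono fun x hx v _ h2 hv => ?_) bot_le
  exact hx ⟨v, by omega, hv⟩

end Markers

section Termination

variable {A B : Type*} [Fintype A] {P : A → ℝ≥0∞} {D : Decoder A B}

lemma foldl_ne_top {S : Type*} {step : S → A → S} {F : S → ℝ≥0∞} (hP : ∀ a, P a ≠ 0)
    (hF : ∀ σ, F σ ≠ ∞ → transition P step F σ ≠ ∞) {σ : S} (hσ : F σ ≠ ∞) (w : List A) :
    F (w.foldl step σ) ≠ ∞ := by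
  induction w generalizing σ with
  | nil => exact hσ
  | cons x _ ih =>
    have hx : P x * F (step σ x) ≠ ∞ := ENNReal.sum_ne_top.1 (hF σ hσ) x (Finset.mem_univ x)
    exact ih fun h => hx (by rw [h, ENNReal.mul_top (hP x)])

lemma Decoder.remaining_eq (D : Decoder A B) (P : A → ℝ≥0∞) (n : ℕ) (w : List A) :
    D.remaining P n w = ∑ a, P a * D.remaining P n (a :: w) + D.undecided n w := by
  unfold remaining
  rw [tsum_eq_zero_add' ENNReal.summable, add_comm]
  simp_rw [← ENNReal.tsum_mul_left, ← Summable.tsum_finsetSum fun _ _ => ENNReal.summable,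
    Function.iterate_succ_apply']
  rfl

/-- The mean number of letters still to be read until all the jobs of a stack are finished. -/
def jobsWork (D : Decoder A B) (P : A → ℝ≥0∞) (l : List (Job A)) : ℝ≥0∞ :=
  (l.map fun j => D.remaining P j.size j.read).sum

lemma jobsWork_cons (D : Decoder A B) (P : A → ℝ≥0∞) (j : Job A) (l : List (Job A)) :
    jobsWork D P (j :: l) = D.remaining P j.size j.read + jobsWork D P l := by
  simp [jobsWork]

lemma sum_jobsWork_feed_add (hP : ∑ a, P a = 1) (l : List (Job A)) :
    ∑ x, P x * jobsWork D P (feed D l x) + {l | HasPending D l}.indicator 1 l =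
      jobsWork D P l := by
  classical
  induction l with
  | nil => simp [feed, jobsWork, HasPending]
  | cons j l ih =>
    rw [jobsWork_cons]
    by_cases hj : D.decode j.size j.read = none
    · simp_rw [feed_cons_of_eq_none hj, jobsWork_cons]
      rw [sum_mul_add_const hP, Decoder.remaining_eq, add_right_comm]
      simp [HasPending, Decoder.undecided, hj]
    · simp_rw [feed_cons_of_ne_none hj, jobsWork_cons, add_comm (D.remaining _ _ _)]
      rw [sum_mul_add_const hP, ← ih, add_right_comm]
      simp [HasPending, Set.indicator_apply, hj]

/-- The mean excess of the number of future markers, over the number expected from their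
frequency, for a machine which still needs `d` marker letters. -/
def markerExcess (α : ℝ≥0∞) (d : ℕ) : ℝ≥0∞ := α ^ d * (1 - α)⁻¹

lemma markerExcess_succ (α : ℝ≥0∞) (d : ℕ) :
    markerExcess α (d + 1) = α * markerExcess α d := by
  rw [markerExcess, markerExcess, pow_succ', mul_assoc]

lemma one_sub_mul_markerExcess {α : ℝ≥0∞} (hα : α < 1) (d : ℕ) :
    (1 - α) * markerExcess α d = α ^ d := by
  rw [markerExcess, mul_left_comm, ENNReal.mul_inv_cancel (tsub_pos_of_lt hα).ne'
    (ENNReal.sub_ne_top ENNReal.one_ne_top), mul_one]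

lemma markerExcess_zero {α : ℝ≥0∞} (hα : α < 1) :
    markerExcess α 0 = 1 + markerExcess α 1 :=
  calc markerExcess α 0 = (1 - α + α) * markerExcess α 0 := by
        rw [tsub_add_cancel_of_le hα.le, one_mul]
    _ = 1 + markerExcess α 1 := by
        rw [add_mul, one_sub_mul_markerExcess hα, ← markerExcess_succ, pow_zero]

namespace Machine

/-- The mean number of letters needed to finish the jobs of the machine, where those of the
next marker are anticipated at the rate `ρ` per letter and the cost `C` per marker. -/
def potential (D : Decoder A B) (P : A → ℝ≥0∞) (a : A) (ρ C : ℝ≥0∞) (σ : Machine A) : ℝ≥0∞ :=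
  jobsWork D P σ.jobs + C * markerExcess (P a) (σ.gap + 1) + ρ * σ.age

variable {a : A} {r : ℕ} {ρ C : ℝ≥0∞}

lemma potential_step_le [DecidableEq A] (ha : P a < 1)
    (htime : ∀ n : ℕ, D.remaining P n [] ≤ ρ * n + C) (σ : Machine A) (x : A) :
    (σ.step D a r x).potential D P a ρ C ≤
      jobsWork D P (feed D σ.jobs x) + C * (if x = a then markerExcess (P a) σ.gap
        else markerExcess (P a) (r + 1)) + ρ * (σ.age + 1) := by
  unfold step potential
  split_ifs with hx hgap
  · rw [jobsWork_cons, hgap, markerExcess_zero ha]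
    calc _ ≤ ρ * (σ.age + 1 : ℕ) + C + jobsWork D P (feed D σ.jobs x) +
          C * markerExcess (P a) 1 + ρ * (0 : ℕ) := by
          gcongr
          exact htime _
      _ = _ := by
        push_cast
        ring
  · rw [Nat.sub_add_cancel (Nat.one_le_iff_ne_zero.2 hgap)]
    exact_mod_cast le_rfl
  · exact_mod_cast le_rfl

lemma transition_potential_add_le (hP : ∑ a, P a = 1) (ha : P a < 1)
    (htime : ∀ n : ℕ, D.remaining P n [] ≤ ρ * n + C) (σ : Machine A) :
    transition P (step D a r) (potential D P a ρ C) σ +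
        {l | HasPending D l}.indicator 1 σ.jobs ≤
      σ.potential D P a ρ C + (ρ + C * P a ^ (r + 1)) := by
  classical
  calc _ ≤ ∑ x, P x * (jobsWork D P (feed D σ.jobs x) + C * (if x = a then
          markerExcess (P a) σ.gap else markerExcess (P a) (r + 1)) + ρ * (σ.age + 1)) +
        {l | HasPending D l}.indicator 1 σ.jobs := by
        unfold transition
        gcongr with x
        exact potential_step_le ha htime σ x
    _ = ∑ x, P x * jobsWork D P (feed D σ.jobs x) +
          {l | HasPending D l}.indicator 1 σ.jobs +
        C * (P a * markerExcess (P a) σ.gap + (1 - P a) * markerExcess (P a) (r + 1)) +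
        ρ * (σ.age + 1) := by
        rw [sum_mul_add_const hP, ← sum_mul_ite_eq hP]
        simp only [mul_add, Finset.sum_add_distrib, Finset.mul_sum, mul_left_comm C]
        ring
    _ = σ.potential D P a ρ C + (ρ + C * P a ^ (r + 1)) := by
        rw [sum_jobsWork_feed_add hP, one_sub_mul_markerExcess ha, ← markerExcess_succ, potential]
        ring

lemma potential_start_ne_top (ha : P a < 1) (hC : C ≠ ∞) :
    start.potential D P a ρ C ≠ ∞ := by
  simp only [potential, start, jobsWork, markerExcess, List.map_nil, List.sum_nil, zero_add,
    pow_one, Nat.cast_zero, mul_zero, add_zero]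
  exact ENNReal.mul_ne_top hC (ENNReal.mul_ne_top (ha.trans ENNReal.one_lt_top).ne
    (ENNReal.inv_ne_top.2 (tsub_pos_of_lt ha).ne'))

variable [MeasurableSpace A] [DiscreteMeasurableSpace A] {p : A → ℝ} {μ : Measure (ℤ → A)}

lemma ae_exists_not_hasPending (hp : IsProbVector p) (hμ : IsBernoulliMeasure μ p)
    (ha : p a < 1) (hC : C ≠ ∞) (hr : ρ + C * ENNReal.ofReal (p a) ^ (r + 1) < 1)
    (htime : ∀ n, D.remaining (fun a => ENNReal.ofReal (p a)) n [] ≤ ρ * n + C)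
    (u : ℤ) (T : ℕ) :
    ∀ᵐ x ∂μ, ∃ t ≥ T, ¬ HasPending D (state D a r x u t).jobs := by
  have ha' : ENNReal.ofReal (p a) < 1 := ENNReal.ofReal_lt_one.2 ha
  have hdrift := transition_potential_add_le (r := r) hp.sum_ofReal ha' htime
  have hV : ∀ σ ∈ {σ : Machine A | HasPending D σ.jobs},
      transition (fun a => ENNReal.ofReal (p a)) (step D a r)
        (potential D (fun a => ENNReal.ofReal (p a)) a ρ C) σ +
        (1 - (ρ + C * ENNReal.ofReal (p a) ^ (r + 1))) ≤
      σ.potential D (fun a => ENNReal.ofReal (p a)) a ρ C := fun σ hσ => by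
    refine (ENNReal.add_le_add_iff_right hr.ne_top).1 ?_
    rw [add_assoc, tsub_add_cancel_of_le hr.le]
    have hσ' : HasPending D σ.jobs := hσ
    simpa [hσ'] using hdrift σ
  refine ae_exists_foldl_window_notMem hp hμ (tsub_pos_of_lt hr).ne' hV
    (foldl_ne_top hp.ofReal_ne_zero (fun σ hσ => ?_) (potential_start_ne_top ha' hC)) u T
  exact ne_top_of_le_ne_top (ENNReal.add_ne_top.2 ⟨hσ, hr.ne_top⟩)
    (le_self_add.trans (hdrift σ))

end Machine

end Termination

section Law

variable {A B : Type*} [Fintype A] {P : A → ℝ≥0∞} {D : Decoder A B}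

/-- The value of a test function `T` at the word of length `n` decoded from the letters `w`.
As long as nothing is decoded, it is the infimum of `T`. -/
def Decoder.testValue (D : Decoder A B) (n : ℕ) (T : (Fin n → B) → ℝ≥0∞) (w : List A) :
    ℝ≥0∞ :=
  (D.decode n w).elim (⨅ g, T g) T

/-- The mean of the test function `T` at the word of length `n` which is decoded when, after
the letters `w`, further letters of law `P` are read. -/
def Decoder.meanValue (D : Decoder A B) (P : A → ℝ≥0∞) (n : ℕ) (T : (Fin n → B) → ℝ≥0∞)
    (w : List A) : ℝ≥0∞ :=
  ⨆ t, (transition P fun w a => a :: w)^[t] (D.testValue n T) w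

lemma Decoder.testValue_le_transition (hP : ∑ a, P a = 1) (n : ℕ) (T : (Fin n → B) → ℝ≥0∞) :
    D.testValue n T ≤ transition P (fun w a => a :: w) (D.testValue n T) := fun w =>
  calc D.testValue n T w = ∑ a, P a * D.testValue n T w := by rw [← Finset.sum_mul, hP, one_mul]
    _ ≤ ∑ a, P a * D.testValue n T (a :: w) := by
      gcongr with a
      unfold testValue
      cases h : D.decode n w with
      | some g => rw [D.decode_cons h]
      | none =>
        cases D.decode n (a :: w) with
        | none => exact le_rfl
        | some g => exact iInf_le T g

lemma Decoder.transition_meanValue_le (hP : ∑ a, P a = 1) (n : ℕ) (T : (Fin n → B) → ℝ≥0∞) :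
    transition P (fun w a => a :: w) (D.meanValue P n T) ≤ D.meanValue P n T := fun w => by
  have hmono : ∀ w, Monotone fun t =>
      (transition P fun w a => a :: w)^[t] (D.testValue n T) w := fun w s t hst =>
    monotone_transition.monotone_iterate_of_le_map (testValue_le_transition hP n T) hst w
  unfold transition meanValue
  simp_rw [ENNReal.mul_iSup]
  rw [ENNReal.finsetSum_iSup_of_monotone fun a => (hmono (a :: w)).const_mul' (P a)]
  refine iSup_le fun t => le_iSup_of_le (t + 1) ?_
  rw [Function.iterate_succ_apply']
  rfl

lemma sum_load_mul_le {I G : Type*} [Fintype G] {S : Finset I} {wt : I → ℝ≥0∞} {π : G → ℝ≥0∞}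
    {f : I → Option G} (hload : ∀ g, load S wt f (some g) ≤ π g)
    (hsum : ∑ i ∈ S, wt i = ∑ g, π g) (hfin : ∑ g, π g ≠ ∞) (T : G → ℝ≥0∞) :
    ∑ i ∈ S, wt i * (f i).elim (⨅ g, T g) T ≤ ∑ g, π g * T g := by
  have hload_ne_top : ∑ g, load S wt f (some g) ≠ ∞ :=
    ne_top_of_le_ne_top hfin (Finset.sum_le_sum fun g _ => hload g)
  have hnone : load S wt f none = ∑ g, (π g - load S wt f (some g)) := by
    refine (ENNReal.add_left_inj hload_ne_top).1 ?_
    rw [load_none_add_sum_load, hsum, ← Finset.sum_add_distrib]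
    exact Finset.sum_congr rfl fun g _ => (tsub_add_cancel_of_le (hload g)).symm
  calc ∑ i ∈ S, wt i * (f i).elim (⨅ g, T g) T
      = (∑ g, (π g - load S wt f (some g))) * (⨅ g, T g) + ∑ g, load S wt f (some g) * T g := by
        rw [sum_mul_comp wt f fun o => o.elim (⨅ g, T g) T, Fintype.sum_option, hnone]
        rfl
    _ ≤ ∑ g, (π g - load S wt f (some g)) * T g + ∑ g, load S wt f (some g) * T g := by
        rw [Finset.sum_mul]
        gcongr with g
        exact iInf_le T g
    _ = ∑ g, π g * T g := by
        simp_rw [← Finset.sum_add_distrib, ← add_mul, tsub_add_cancel_of_le (hload _)]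

/-- The mean product of the values of the tests `τ k` at the output letters of a stack. -/
def jobsValue (D : Decoder A B) (P : A → ℝ≥0∞) (τ : ℕ → B → ℝ≥0∞) : List (Job A) → ℝ≥0∞
  | [] => 1
  | j :: l => jobsValue D P τ l *
      D.meanValue P j.size (fun g => ∏ i : Fin j.size, τ (jobsLen l + i) (g i)) j.read

lemma sum_jobsValue_feed_le (hP : ∑ a, P a = 1) (τ : ℕ → B → ℝ≥0∞) (l : List (Job A)) :
    ∑ x, P x * jobsValue D P τ (feed D l x) ≤ jobsValue D P τ l := by
  induction l with
  | nil => simp [feed, jobsValue, hP]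
  | cons j l ih =>
    by_cases hj : D.decode j.size j.read = none
    · simp only [feed_cons_of_eq_none hj, jobsValue, mul_left_comm (P _), ← Finset.mul_sum]
      gcongr
      exact Decoder.transition_meanValue_le hP j.size
        (fun g => ∏ i : Fin j.size, τ (jobsLen l + i) (g i)) j.read
    · simp only [feed_cons_of_ne_none hj, jobsValue, jobsLen_feed, ← mul_assoc, ← Finset.sum_mul]
      gcongr

lemma Decoder.Simulates.meanValue_nil_le [Fintype B] {Q : B → ℝ≥0∞} (hD : D.Simulates P Q)
    (hP : ∑ a, P a = 1) (hQ : ∑ b, Q b = 1) (n : ℕ) (τ : ℕ → B → ℝ≥0∞) :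
    D.meanValue P n (fun g => ∏ i : Fin n, τ i (g i)) [] ≤ ∏ i : Fin n, ∑ b, Q b * τ i b := by
  have hsum : ∑ g : Fin n → B, ∏ i, Q (g i) = 1 := by
    simpa [hQ] using (Fintype.sum_pow Q n).symm
  refine iSup_le fun t => ?_
  rw [iterate_transition_cons_nil]
  refine (sum_load_mul_le (hD n t) ((sum_wordWeight hP t).trans hsum.symm)
    (hsum ▸ ENNReal.one_ne_top) _).trans_eq ?_
  simp_rw [Finset.prod_univ_sum, Fintype.piFinset_univ, Finset.prod_mul_distrib]

open Classical in
/-- The test for the letter at place `k` to agree with `y` if `k ∈ F`. -/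
def agreeTest (F : Finset ℕ) (y : ℕ → B) (k : ℕ) (b : B) : ℝ≥0∞ :=
  if k ∈ F → b = y k then 1 else 0

lemma sum_mul_agreeTest [Fintype B] {Q : B → ℝ≥0∞} (hQ : ∑ b, Q b = 1) (F : Finset ℕ)
    (y : ℕ → B) (k : ℕ) : ∑ b, Q b * agreeTest F y k b = if k ∈ F then Q (y k) else 1 := by
  classical
  by_cases hk : k ∈ F <;> simp [agreeTest, hk, hQ]

lemma prod_ite_mul_prod_filter {M : Type*} [CommMonoid M] (F : Finset ℕ) (c : ℕ → M)
    (s n : ℕ) : (∏ i : Fin n, if s + i ∈ F then c (s + i) else 1) *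
      ∏ k ∈ F with s + n ≤ k, c k = ∏ k ∈ F with s ≤ k, c k := by
  rw [Fin.prod_univ_eq_prod_range (fun i => if s + i ∈ F then c (s + i) else 1),
    ← Finset.prod_filter, ← Finset.prod_filter_mul_prod_filter_not {k ∈ F | s ≤ k} (· < s + n),
    Finset.filter_filter, Finset.filter_filter]
  congr 1
  · refine Finset.prod_nbij' (s + ·) (· - s) ?_ ?_ ?_ ?_ fun _ _ => rfl <;>
      grind
  · exact Finset.prod_congr (Finset.filter_congr fun k _ => by omega) fun _ _ => rfl

lemma one_le_jobsValue (F : Finset ℕ) (y : ℕ → B) (l : List (Job A))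
    (h : ∀ k ∈ F, k < jobsLen l → IsOutput D l k (y k)) :
    1 ≤ jobsValue D P (agreeTest F y) l := by
  induction l with
  | nil => exact le_rfl
  | cons j l ih =>
    have hdecode : ∀ i : Fin j.size, jobsLen l + i ∈ F →
        ∃ g, D.decode j.size j.read = some g ∧ g i = y (jobsLen l + i) := fun i hi =>
      (h _ hi (by rw [jobsLen_cons]; omega)).exists_decode i
    refine one_le_mul (ih fun k hk hkl => (h k hk ?_).of_cons hkl) (le_iSup_of_le 0 ?_)
    · rw [jobsLen_cons]
      omega
    · rw [Function.iterate_zero, id, Decoder.testValue]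
      cases hj : D.decode j.size j.read with
      | none =>
        have hF : ∀ i : Fin j.size, jobsLen l + i ∉ F := fun i hi => by
          simpa [hj] using hdecode i hi
        simp [agreeTest, hF]
      | some g =>
        have hF : ∀ i : Fin j.size, jobsLen l + i ∈ F → g i = y (jobsLen l + i) := fun i hi => by
          simpa [hj] using hdecode i hi
        simp +contextual [agreeTest, hF]

variable {Q : B → ℝ≥0∞} {a : A} {r : ℕ}

namespace Machine

/-- The probability that the output of the machine is going to agree with `y` on `F`, where the
letters which no job has promised yet count as independent letters of law `Q`. -/
def agreeValue (D : Decoder A B) (P : A → ℝ≥0∞) (Q : B → ℝ≥0∞) (F : Finset ℕ) (y : ℕ → B)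
    (σ : Machine A) : ℝ≥0∞ :=
  jobsValue D P (agreeTest F y) σ.jobs * ∏ k ∈ F with jobsLen σ.jobs ≤ k, Q (y k)

lemma one_le_agreeValue {F : Finset ℕ} {y : ℕ → B} {σ : Machine A}
    (h : ∀ k ∈ F, IsOutput D σ.jobs k (y k)) : 1 ≤ σ.agreeValue D P Q F y := by
  rw [agreeValue, Finset.filter_false_of_mem fun k hk => (h k hk).lt_jobsLen.not_ge,
    Finset.prod_empty, mul_one]
  exact one_le_jobsValue F y σ.jobs fun k hk _ => h k hk

lemma agreeValue_start (D : Decoder A B) (P : A → ℝ≥0∞) (Q : B → ℝ≥0∞) (F : Finset ℕ)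
    (y : ℕ → B) : start.agreeValue D P Q F y = ∏ k ∈ F, Q (y k) := by
  simp [agreeValue, start, jobsValue, jobsLen]

variable [Fintype B]

lemma agreeValue_step_le (hD : D.Simulates P Q) (hP : ∑ a, P a = 1) (hQ : ∑ b, Q b = 1)
    (F : Finset ℕ) (y : ℕ → B) (σ : Machine A) (x : A) :
    (σ.step D a r x).agreeValue D P Q F y ≤ jobsValue D P (agreeTest F y) (feed D σ.jobs x) *
      ∏ k ∈ F with jobsLen σ.jobs ≤ k, Q (y k) := by
  unfold step agreeValue
  split_ifs
  · rw [jobsValue, mul_assoc, jobsLen_cons, jobsLen_feed, add_comm (σ.age + 1),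
      ← prod_ite_mul_prod_filter F _ (jobsLen σ.jobs) (σ.age + 1)]
    gcongr
    simpa only [sum_mul_agreeTest hQ] using hD.meanValue_nil_le hP hQ (σ.age + 1)
      fun i => agreeTest F y (jobsLen σ.jobs + i)
  · rw [jobsLen_feed]
  · rw [jobsLen_feed]

lemma transition_agreeValue_le (hD : D.Simulates P Q) (hP : ∑ a, P a = 1) (hQ : ∑ b, Q b = 1)
    (F : Finset ℕ) (y : ℕ → B) :
    transition P (step D a r) (agreeValue D P Q F y) ≤ agreeValue D P Q F y := fun σ =>
  calc transition P (step D a r) (agreeValue D P Q F y) σ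
      ≤ ∑ x, P x * (jobsValue D P (agreeTest F y) (feed D σ.jobs x) *
          ∏ k ∈ F with jobsLen σ.jobs ≤ k, Q (y k)) := by
        unfold transition
        gcongr with x
        exact agreeValue_step_le hD hP hQ F y σ x
    _ ≤ σ.agreeValue D P Q F y := by
        simp_rw [← mul_assoc, ← Finset.sum_mul]
        unfold agreeValue
        gcongr
        exact sum_jobsValue_feed_le hP _ _

lemma measure_isOutput_state_le [MeasurableSpace A] [DiscreteMeasurableSpace A] {p : A → ℝ}
    {q : B → ℝ} {μ : Measure (ℤ → A)} (hp : IsProbVector p) (hq : IsProbVector q)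
    (hμ : IsBernoulliMeasure μ p)
    (hD : D.Simulates (fun a => ENNReal.ofReal (p a)) fun b => ENNReal.ofReal (q b))
    (F : Finset ℕ) (y : ℕ → B) (u : ℤ) (n : ℕ) :
    μ {x | ∀ k ∈ F, IsOutput D (state D a r x u n).jobs k (y k)} ≤
      ∏ k ∈ F, ENNReal.ofReal (q (y k)) := by
  set G := {σ : Machine A | ∀ k ∈ F, IsOutput D σ.jobs k (y k)}
  have hindicator : G.indicator (fun _ => 1) ≤ agreeValue D (fun a => ENNReal.ofReal (p a))
      (fun b => ENNReal.ofReal (q b)) F y :=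
    Set.indicator_le fun σ hσ => one_le_agreeValue hσ
  rw [← one_mul (μ _)]
  refine (measure_foldl_window hp hμ (step D a r) G 1 start u n).trans_le ?_
  rw [← agreeValue_start D (fun a => ENNReal.ofReal (p a)) (fun b => ENNReal.ofReal (q b))]
  exact (monotone_transition.iterate n hindicator start).trans <|
    iterate_transition_le (transition_agreeValue_le hD hp.sum_ofReal hq.sum_ofReal F y) n start

end Machine

end Law

section Code

variable {A B : Type*} {D : Decoder A B} {a : A} {r : ℕ} {x y : ℤ → A} {s u : ℤ} {b c : B}
  {k l m n : ℕ}

/-- A machine started at a marker just before position `s - k` has decoded the letter `b` for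
position `s` after reading `n` letters of `x`. -/
def Writes (D : Decoder A B) (a : A) (r : ℕ) (x : ℤ → A) (s : ℤ) (b : B) (k n : ℕ) : Prop :=
  IsMarker a r x (s - k) ∧ IsOutput D (Machine.state D a r x (s - k) n).jobs k b

lemma Writes.isOutput (h : Writes D a r x s b k n) (hu : u ≤ s - k) (hn : s - k + n ≤ u + m) :
    IsOutput D (Machine.state D a r x u m).jobs (s - u).toNat b := by
  obtain ⟨j, hj⟩ := Int.le.dest hu
  rw [Writes, ← hj, ← Machine.isOutput_state_add_iff (hj ▸ h.1)] at h
  rw [show (s - u).toNat = j + k by omega]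
  exact Machine.isOutput_state_mono (by omega) h.2

lemma Writes.unique (hb : Writes D a r x s b k m) (hc : Writes D a r x s c l n) : b = c :=
  IsOutput.unique
    (hb.isOutput (u := s - (k + l)) (m := k + l + m + n) (by omega) (by push_cast; omega))
    (hc.isOutput (by omega) (by push_cast; omega))

lemma Writes.congr (h : Writes D a r x s b k n)
    (hxy : ∀ i, s - k - (r + 1) ≤ i → i ≤ s + n → y i = x i) : Writes D a r y s b k n := by
  refine ⟨fun i h1 h2 => (hxy i h1 (by omega)).trans (h.1 i h1 h2), ?_⟩
  rw [Machine.state, window_congr fun i h1 h2 => hxy i (by omega) (by omega)]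
  exact h.2

lemma isMarker_shift_iff : IsMarker a r (shift x) u ↔ IsMarker a r x (u + 1) := by
  refine ⟨fun h i h1 h2 => ?_, fun h i h1 h2 => h (i + 1) (by omega) (by omega)⟩
  simpa [shift] using h (i - 1) (by omega) (by omega)

lemma writes_shift_iff : Writes D a r (shift x) s b k n ↔ Writes D a r x (s + 1) b k n := by
  rw [Writes, Writes, Machine.state, window_shift, isMarker_shift_iff, sub_add_eq_add_sub]
  rfl

/-- The sequences for which every output letter is eventually written. -/
def codeDomain (D : Decoder A B) (a : A) (r : ℕ) : Set (ℤ → A) :=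
  {x | ∀ s, ∃ b k n, Writes D a r x s b k n}

/-- The code, which maps `x` to the letters written by the machines started at its markers, with
junk at the positions where nothing is ever written. -/
def code [Nonempty B] (D : Decoder A B) (a : A) (r : ℕ) (x : ℤ → A) (s : ℤ) : B :=
  Classical.epsilon fun b => ∃ k n, Writes D a r x s b k n

lemma shift_preimage_codeDomain : shift ⁻¹' codeDomain D a r = codeDomain D a r := by
  ext x
  simp only [codeDomain, Set.mem_preimage, Set.mem_ofPred_eq, writes_shift_iff]
  exact ⟨fun h s => by simpa using h (s - 1), fun h s => h (s + 1)⟩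

section Nonempty

variable [Nonempty B]

lemma Writes.code_eq (h : Writes D a r x s b k n) : code D a r x s = b := by
  obtain ⟨l, m, h'⟩ := Classical.epsilon_spec (p := fun b => ∃ k n, Writes D a r x s b k n)
    ⟨b, k, n, h⟩
  exact h'.unique h

lemma exists_writes_code (hx : x ∈ codeDomain D a r) (s : ℤ) :
    ∃ k n, Writes D a r x s (code D a r x s) k n :=
  Classical.epsilon_spec (hx s)

lemma code_shift (hx : x ∈ codeDomain D a r) : code D a r (shift x) = shift (code D a r x) := by
  funext s
  obtain ⟨k, n, h⟩ := exists_writes_code hx (s + 1)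
  exact (writes_shift_iff.2 h).code_eq

lemma exists_determinesAt_code (hx : x ∈ codeDomain D a r) :
    ∃ m n : ℕ, DeterminesAt (codeDomain D a r) (code D a r) m n x := by
  obtain ⟨k, n, h⟩ := exists_writes_code hx 0
  refine ⟨k + (r + 1), n, fun y _ hxy => (h.congr fun i h1 h2 => ?_).code_eq⟩
  exact hxy i (by push_cast; omega) (by omega)

end Nonempty

end Code

section CodeMeasure

variable {A B : Type*} [MeasurableSpace A] [DiscreteMeasurableSpace A] {D : Decoder A B} {a : A}
  {r : ℕ}

lemma measurable_isMarker (v : ℤ) : Measurable fun x : ℤ → A => IsMarker a r x v :=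
  Measurable.forall fun i => measurable_const.imp <| measurable_const.imp <|
    (Measurable.of_discrete (f := (· = a))).comp (measurable_pi_apply i)

section Measurability

variable [Countable A]

lemma measurable_exists_writes (s : ℤ) (b : B) :
    Measurable fun x => ∃ k n, Writes D a r x s b k n :=
  Measurable.exists fun k => Measurable.exists fun n => (measurable_isMarker _).and <|
    measurable_comp_window
      (fun w => IsOutput D (w.foldl (Machine.step D a r) Machine.start).jobs k b) _ n

variable [Finite B]

lemma measurableSet_codeDomain : MeasurableSet (codeDomain D a r) :=
  measurableSet_setOfPred.2 <| Measurable.forall fun s => Measurable.exists fun b =>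
    measurable_exists_writes s b

lemma measurable_code [Nonempty B] [MeasurableSpace B] : Measurable (code D a r) :=
  measurable_pi_iff.2 fun s => (measurable_of_countable Classical.epsilon).comp <|
    measurable_pi_iff.2 fun b => measurable_exists_writes s b

end Measurability

variable [Fintype A] {p : A → ℝ} {μ : Measure (ℤ → A)}

lemma ae_mem_codeDomain (hp : IsProbVector p) (hμ : IsBernoulliMeasure μ p)
    (hfin : ∀ (u : ℤ) (T : ℕ),
      ∀ᵐ x ∂μ, ∃ t ≥ T, ¬ HasPending D (Machine.state D a r x u t).jobs) :
    ∀ᵐ x ∂μ, x ∈ codeDomain D a r := by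
  filter_upwards [ae_all_iff.2 fun u => ae_all_iff.2 (hfin u),
    ae_all_iff.2 (ae_exists_isMarker_ge hp hμ a r),
    ae_all_iff.2 (ae_exists_isMarker_le hp hμ a r)] with x hx hge hle s
  obtain ⟨v, hvs, hv⟩ := hle s
  obtain ⟨v', hsv', hv'⟩ := hge (s + 1)
  obtain ⟨k, rfl⟩ : ∃ k : ℕ, v = s - k := ⟨(s - v).toNat, by omega⟩
  obtain ⟨n, rfl⟩ : ∃ n : ℕ, v' = s - k + n := ⟨(v' - (s - k)).toNat, by omega⟩
  obtain ⟨t, hnt, ht⟩ := hx (s - k) n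
  have hlen : n ≤ jobsLen (Machine.state D a r x (s - k) t).jobs :=
    (Machine.jobsLen_state_of_isMarker hv').ge.trans (Machine.monotone_jobsLen_state hnt)
  obtain ⟨b, hb⟩ := exists_isOutput (by omega : k < _) ht
  exact ⟨b, k, t, hv, hb⟩

variable [Fintype B] {q : B → ℝ}

lemma measure_isOutput_toNat_le (hp : IsProbVector p) (hq : IsProbVector q)
    (hμ : IsBernoulliMeasure μ p)
    (hD : D.Simulates (fun a => ENNReal.ofReal (p a)) fun b => ENNReal.ofReal (q b))
    {F : Finset ℤ} {u : ℤ} (hF : ∀ s ∈ F, u ≤ s) (y : ℤ → B) (n : ℕ) :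
    μ {x | ∀ s ∈ F, IsOutput D (Machine.state D a r x u n).jobs (s - u).toNat (y s)} ≤
      ∏ s ∈ F, ENNReal.ofReal (q (y s)) := by
  have hto : ∀ s ∈ F, u + ((s - u).toNat : ℤ) = s := fun s hs => by
    have := hF s hs
    omega
  have hinj : Set.InjOn (fun s : ℤ => (s - u).toNat) F := fun s hs t ht hst => by
    rw [← hto s hs, ← hto t ht, show (s - u).toNat = (t - u).toNat from hst]
  calc _ ≤ μ {x | ∀ k ∈ F.image fun s => (s - u).toNat,
        IsOutput D (Machine.state D a r x u n).jobs k (y (u + k))} := by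
        refine measure_mono fun x hx => Finset.forall_mem_image.2 fun s hs => ?_
        rw [hto s hs]
        exact hx s hs
    _ ≤ ∏ k ∈ F.image fun s => (s - u).toNat, ENNReal.ofReal (q (y (u + k))) :=
        Machine.measure_isOutput_state_le hp hq hμ hD _ (fun k => y (u + k)) u n
    _ = ∏ s ∈ F, ENNReal.ofReal (q (y s)) := by
        rw [Finset.prod_image hinj]
        exact Finset.prod_congr rfl fun s hs => by rw [hto s hs]

lemma measure_writes_le (hp : IsProbVector p) (hq : IsProbVector q)
    (hμ : IsBernoulliMeasure μ p)
    (hD : D.Simulates (fun a => ENNReal.ofReal (p a)) fun b => ENNReal.ofReal (q b))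
    (F : Finset ℤ) (y : ℤ → B) :
    μ {x | ∀ s ∈ F, ∃ k n, Writes D a r x s (y s) k n} ≤
      ∏ s ∈ F, ENNReal.ofReal (q (y s)) := by
  let G (N : ℕ) : Set (ℤ → A) := {x | ∀ s ∈ F, ∃ k n : ℕ,
    (-N : ℤ) ≤ s - k ∧ s - k + n ≤ N ∧ Writes D a r x s (y s) k n}
  have hmono : Monotone G := fun M N hMN x hx s hs => by
    obtain ⟨k, n, hk, hn, h⟩ := hx s hs
    exact ⟨k, n, by omega, by omega, h⟩
  have hunion : {x | ∀ s ∈ F, ∃ k n, Writes D a r x s (y s) k n} ⊆ ⋃ N, G N := fun x hx => by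
    choose! k n h using hx
    refine Set.mem_iUnion.2 ⟨F.sup fun s => s.natAbs + k s + n s, fun s hs => ?_⟩
    have hle := Finset.le_sup (f := fun s => s.natAbs + k s + n s) hs
    exact ⟨k s, n s, by omega, by omega, h s hs⟩
  refine (measure_mono hunion).trans ?_
  rw [hmono.measure_iUnion]
  refine iSup_le fun N => ?_
  obtain hempty | ⟨x₀, hx₀⟩ := (G N).eq_empty_or_nonempty
  · simp [hempty]
  have hF : ∀ s ∈ F, (-N : ℤ) ≤ s := fun s hs => by
    obtain ⟨k, n, hk, -⟩ := hx₀ s hs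
    omega
  refine (measure_mono fun x hx s hs => ?_).trans
    (measure_isOutput_toNat_le (a := a) (r := r) hp hq hμ hD hF y (2 * N))
  obtain ⟨k, n, hk, hn, h⟩ := hx s hs
  exact h.isOutput hk (by push_cast; omega)

lemma measure_code_eq_le [Nonempty B] (hp : IsProbVector p) (hq : IsProbVector q)
    (hμ : IsBernoulliMeasure μ p)
    (hD : D.Simulates (fun a => ENNReal.ofReal (p a)) fun b => ENNReal.ofReal (q b))
    (hdom : ∀ᵐ x ∂μ, x ∈ codeDomain D a r) (F : Finset ℤ) (y : ℤ → B) :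
    μ {x | ∀ s ∈ F, code D a r x s = y s} ≤ ∏ s ∈ F, ENNReal.ofReal (q (y s)) := by
  refine (measure_mono_ae ?_).trans
    (measure_writes_le (a := a) (r := r) hp hq hμ hD F y)
  filter_upwards [hdom] with x hx hxy s hs
  exact hxy s hs ▸ exists_writes_code hx s

end CodeMeasure

section Cylinder

variable {ι B : Type*}

lemma restrict_preimage_singleton (F : Finset ι) (y : ι → B) :
    F.restrict (π := fun _ => B) ⁻¹' {F.restrict y} = {x | ∀ s ∈ F, x s = y s} := by
  ext x
  simp [funext_iff]

variable [MeasurableSpace B] [MeasurableSingletonClass B]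

lemma measurableSet_forall_mem_eq (F : Finset ι) (y : ι → B) :
    MeasurableSet {x : ι → B | ∀ s ∈ F, x s = y s} :=
  restrict_preimage_singleton F y ▸ Finset.measurable_restrict F (measurableSet_singleton _)

lemma eq_of_forall_cylinder_le [Finite B] {κ ν : Measure (ι → B)} [IsProbabilityMeasure κ]
    [IsProbabilityMeasure ν]
    (h : ∀ (F : Finset ι) (y : ι → B),
      κ {x | ∀ s ∈ F, x s = y s} ≤ ν {x | ∀ s ∈ F, x s = y s}) :
    κ = ν := by
  refine IsProjectiveLimit.unique (P := fun F : Finset ι => ν.map F.restrict) (fun F => ?_)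
    fun F => rfl
  have hF : Measurable (F.restrict (π := fun _ : ι => B)) := Finset.measurable_restrict F
  have := Measure.isProbabilityMeasure_map (μ := κ) hF.aemeasurable
  have := Measure.isProbabilityMeasure_map (μ := ν) hF.aemeasurable
  obtain ⟨y₀⟩ := nonempty_of_isProbabilityMeasure ν
  have hsingleton : ∀ z : F → B, κ.map F.restrict {z} ≤ ν.map F.restrict {z} := fun z => by
    obtain ⟨y, rfl⟩ : ∃ y : ι → B, F.restrict y = z := ⟨Function.extend Subtype.val z y₀,
      funext fun s => Subtype.val_injective.extend_apply z y₀ s⟩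
    rw [Measure.map_apply hF (measurableSet_singleton _),
      Measure.map_apply hF (measurableSet_singleton _), restrict_preimage_singleton]
    exact h F y
  refine Measure.eq_of_le_of_isProbabilityMeasure (Measure.le_iff.2 fun s _ => ?_)
  rw [← s.toFinite.coe_toFinset, ← sum_measure_singleton, ← sum_measure_singleton]
  exact Finset.sum_le_sum fun z _ => hsingleton z

end Cylinder

lemma isFactorMap_code {A B : Type*} [Fintype A] [Fintype B] [Nonempty B]
    [MeasurableSpace A] [DiscreteMeasurableSpace A] [MeasurableSpace B] [DiscreteMeasurableSpace B]
    {D : Decoder A B} {a : A} {r : ℕ} {p : A → ℝ} {q : B → ℝ} {μ : Measure (ℤ → A)}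
    {ν : Measure (ℤ → B)} (hp : IsProbVector p) (hq : IsProbVector q)
    (hμ : IsBernoulliMeasure μ p) (hν : IsBernoulliMeasure ν q)
    (hD : D.Simulates (fun a => ENNReal.ofReal (p a)) fun b => ENNReal.ofReal (q b))
    (hdom : ∀ᵐ x ∂μ, x ∈ codeDomain D a r) :
    IsFactorMap μ ν (codeDomain D a r) (code D a r) := by
  have := hp.nonempty
  have := hμ.isProbabilityMeasure
  have := hν.isProbabilityMeasure
  have hcode : Measurable (code D a r) := measurable_code
  have := Measure.isProbabilityMeasure_map (μ := μ) hcode.aemeasurable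
  have hle : ∀ (F : Finset ℤ) (y : ℤ → B),
      μ.map (code D a r) {z | ∀ s ∈ F, z s = y s} ≤ ν {z | ∀ s ∈ F, z s = y s} := fun F y => by
    rw [Measure.map_apply hcode (measurableSet_forall_mem_eq F y), hν,
      ENNReal.ofReal_prod_of_nonneg fun s _ => (hq.1 _).le]
    exact measure_code_eq_le hp hq hμ hD hdom F y
  exact
    { measurable_map := hcode
      dom_measurable := measurableSet_codeDomain
      dom_shift_invariant := shift_preimage_codeDomain
      dom_full := (mem_ae_iff_prob_eq_one measurableSet_codeDomain).1 hdom
      pushforward := (eq_of_forall_cylinder_le hle).symm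
      equivariant := fun x => code_shift }

lemma exists_add_mul_pow_lt_one {ρ C c : ℝ≥0∞} (hρ : ρ < 1) (hC : C ≠ ∞) (hc : c < 1) :
    ∃ r : ℕ, ρ + C * c ^ (r + 1) < 1 := by
  have h : Tendsto (fun r : ℕ => ρ + C * c ^ (r + 1)) atTop (nhds (ρ + C * 0)) :=
    tendsto_const_nhds.add <| ENNReal.Tendsto.const_mul
      ((tendsto_add_atTop_iff_nat 1).2 (ENNReal.tendsto_pow_atTop_nhds_zero_of_lt_one hc))
      (Or.inr hC)
  rw [mul_zero, add_zero] at h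
  exact (h.eventually (gt_mem_nhds hρ)).exists

end FinitaryCoding

/-- **Keane–Smorodinsky (unequal entropies).** If `p` and `q` are strictly positive
probability vectors on finite alphabets with `H(p) > H(q)`, then there exists a finitary
homomorphism from `BS(p)` to `BS(q)`. -/
theorem finitary_factor_of_entropy_gt
    {A B : Type*} [Fintype A] [Fintype B]
    [MeasurableSpace A] [DiscreteMeasurableSpace A]
    [MeasurableSpace B] [DiscreteMeasurableSpace B]
    (p : A → ℝ) (q : B → ℝ) (hp : IsProbVector p) (hq : IsProbVector q)
    (μ : Measure (ℤ → A)) (ν : Measure (ℤ → B))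
    (hμ : IsBernoulliMeasure μ p) (hν : IsBernoulliMeasure ν q)
    (hH : vecEntropy q < vecEntropy p) :
    ∃ (D : Set (ℤ → A)) (φ : (ℤ → A) → (ℤ → B)),
      IsFactorMap μ ν D φ ∧ IsFinitary μ D φ := by
  have := hq.nonempty
  obtain ⟨a, ha⟩ := hp.exists_lt_one (hq.vecEntropy_nonneg.trans_lt hH)
  obtain ⟨dec, ρ, C, hρ, hC, hsim, htime⟩ := FinitaryCoding.exists_decoder hp hq hH
  obtain ⟨r, hr⟩ := FinitaryCoding.exists_add_mul_pow_lt_one hρ hC (ENNReal.ofReal_lt_one.2 ha)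
  have hfinish := FinitaryCoding.Machine.ae_exists_not_hasPending hp hμ ha hC hr htime
  have hdom := FinitaryCoding.ae_mem_codeDomain hp hμ hfinish
  exact ⟨FinitaryCoding.codeDomain dec a r, FinitaryCoding.code dec a r,
    FinitaryCoding.isFactorMap_code hp hq hμ hν hsim hdom,
    ae_of_all _ fun x => FinitaryCoding.exists_determinesAt_code⟩
end
end

section
/- Let (X, μ, S) and (Y, ν, T) be sequence spaces over finite alphabets with ergodic shift-invariant probability measures, and let φ be a finitary isomorphism from X to Y such that both φ and φ^{-1} have finite expected code lengths. Then the information cocycles I_S and I_T∘φ are cohomologous with a finite-valued measurable transfer function: there exists a measurable, almost everywhere finite real-valued function g on X such that I_S = I_T∘φ + g∘S − g holds μ-almost everywhere. -/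
open MeasureTheory ENNReal Filter

noncomputable section

/-- The σ-algebra `α⁻` on `ℤ → A` generated by the coordinates `x_i`, `i ≥ 1`. -/
def futureSigma (A : Type*) [MeasurableSpace A] : MeasurableSpace (ℤ → A) :=
  ⨆ i ∈ {i : ℤ | 1 ≤ i}, MeasurableSpace.comap (fun x : ℤ → A => x i) inferInstance

/-- The information cocycle `I_S = -∑_i χ_{A_i} log μ(A_i | α⁻)` of the shift on
`(ℤ → A, μ)`, where `A_i = {x : x₀ = i}` is the time-zero partition and `μ(A_i | α⁻)` is
the conditional probability of `A_i` given the coordinates `x_j`, `j ≥ 1`. -/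
noncomputable def infoCocycle {A : Type*} [Fintype A] [MeasurableSpace A]
    (μ : Measure (ℤ → A)) : (ℤ → A) → ℝ := fun x =>
  -∑ i : A,
    Set.indicator {y : ℤ → A | y 0 = i} (fun _ => (1 : ℝ)) x *
      Real.log ((μ[Set.indicator {y : ℤ → A | y 0 = i} (fun _ => (1 : ℝ))|futureSigma A]) x)

/-!
Write `X = (x₀, x₁, …)` for the future of the input and `Y` for the future of its image under `φ`.
Expanding the conditional probability of `(X₀, Y)` given `X ∘ S` by the chain rule in two ways gives

  `P(X₀ | X ∘ S) P(Y | X) = P(Y ∘ S | X ∘ S) P(X₀, Y₀ | X ∘ S, Y ∘ S)`,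

and likewise with `X` and `Y` exchanged. Since the last factor is symmetric in `X` and `Y`, dividing
shows that `P(X₀ | X ∘ S) / P(Y₀ | Y ∘ S)` is the multiplicative coboundary of
`P(Y | X) / P(X | Y)`, provided that these two conditional point probabilities are positive.

Positivity comes from the code lengths. As the past code length `q` is integrable, the first
Borel–Cantelli lemma yields `q(Sⁿ x) ≤ m + n` for all `n`, with `m = m(x)` finite. Hence `Y` is
determined by `X` together with the `m` letters before time zero. Given `X`, the sequence `Y` thus
takes only countably many values, and almost surely hits an atom of its conditional distribution.
-/

open ProbabilityTheory

section HasCondDistrib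

variable {Ω Ω' α β γ : Type*} [MeasurableSpace Ω] [MeasurableSpace Ω']
  [MeasurableSpace α] [MeasurableSpace β] [MeasurableSpace γ]
  {μ : Measure Ω} {μ' : Measure Ω'} {U : Ω → α} {V : Ω → β} {W : Ω → γ}

lemma hasCondDistrib_condDistrib [StandardBorelSpace α] [Nonempty α] [IsFiniteMeasure μ]
    (hU : AEMeasurable U μ) (hW : AEMeasurable W μ) :
    HasCondDistrib U W (condDistrib U W μ) μ :=
  ⟨hW.prodMk hU, (compProd_map_condDistrib hU).symm⟩

lemma hasCondDistrib_prodMk [SFinite μ] {κ : Kernel γ α} {η : Kernel (γ × α) β}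
    [IsSFiniteKernel κ] [IsSFiniteKernel η] (hU : HasCondDistrib U W κ μ)
    (hV : HasCondDistrib V (fun ω => (W ω, U ω)) η μ) :
    HasCondDistrib (fun ω => (U ω, V ω)) W (κ ⊗ₖ η) μ := by
  have hWU : AEMeasurable (fun ω => (W ω, U ω)) μ := hU.aemeasurable
  have hWUV : AEMeasurable (fun ω => ((W ω, U ω), V ω)) μ := hV.aemeasurable
  refine ⟨hWU.fst.prodMk (hWU.snd.prodMk hWUV.snd), ?_⟩
  rw [← Measure.compProd_assoc', ← hU.map_eq, ← hV.map_eq,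
    AEMeasurable.map_map_of_aemeasurable (by fun_prop) hWUV]
  rfl

lemma hasCondDistrib_comp_measurePreserving {κ : Kernel γ α} {T : Ω' → Ω}
    (h : HasCondDistrib U W κ μ) (hT : MeasurePreserving T μ' μ) :
    HasCondDistrib (U ∘ T) (W ∘ T) κ μ' := by
  have hWU : AEMeasurable (fun ω => (W ω, U ω)) (μ'.map T) := hT.map_eq ▸ h.aemeasurable
  refine ⟨hWU.comp_measurable hT.measurable, ?_⟩
  have hlaw : (μ'.map T).map (fun ω => (W ω, U ω)) = (μ'.map T).map W ⊗ₘ κ :=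
    hT.map_eq ▸ h.map_eq
  rwa [AEMeasurable.map_map_of_aemeasurable hWU hT.measurable.aemeasurable,
    AEMeasurable.map_map_of_aemeasurable hWU.fst hT.measurable.aemeasurable] at hlaw

end HasCondDistrib

lemma measurable_kernel_singleton {α γ : Type*} [MeasurableSpace α] [MeasurableEq α]
    [MeasurableSpace γ] (κ : Kernel γ α) [IsSFiniteKernel κ] :
    Measurable fun p : γ × α => κ p.1 {p.2} := by
  have h : MeasurableSet {q : (γ × α) × α | q.2 = q.1.2} :=
    measurableSet_eq_fun (by fun_prop) (by fun_prop)
  exact Kernel.measurable_kernel_prodMk_left (κ := κ.prodMkRight α) h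

section CondPointProb

variable {Ω Ω' α β γ δ : Type*} [MeasurableSpace Ω] [MeasurableSpace Ω']
  [MeasurableSpace α] [MeasurableSpace β] [MeasurableSpace γ] [MeasurableSpace δ]
  [StandardBorelSpace α] [Nonempty α] [StandardBorelSpace β] [Nonempty β]
  {μ : Measure Ω} {μ' : Measure Ω'} [IsFiniteMeasure μ] [IsFiniteMeasure μ']
  {U U' : Ω → α} {V : Ω → β} {W W' : Ω → γ}

/-- The conditional probability, given the value of `W`, that `U` takes the value it does. Its
negative logarithm is the conditional information function `I(U | W)`. -/
def condPointProb (U : Ω → α) (W : Ω → γ) (μ : Measure Ω) [IsFiniteMeasure μ] (ω : Ω) : ℝ :=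
  (condDistrib U W μ (W ω)).real {U ω}

lemma measurable_condPointProb (hU : Measurable U) (hW : Measurable W) :
    Measurable (condPointProb U W μ) :=
  ((measurable_kernel_singleton (condDistrib U W μ)).comp (hW.prodMk hU)).ennreal_toReal

lemma condPointProb_congr (hU : U =ᵐ[μ] U') (hW : W =ᵐ[μ] W') :
    condPointProb U W μ =ᵐ[μ] condPointProb U' W' μ := by
  filter_upwards [hU, hW] with ω hUω hWω
  rw [condPointProb, condPointProb, condDistrib_congr hU hW, hUω, hWω]

lemma condPointProb_ae_eq_of_hasCondDistrib {κ : Kernel γ α} [IsFiniteKernel κ]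
    (h : HasCondDistrib U W κ μ) : condPointProb U W μ =ᵐ[μ] fun ω => (κ (W ω)).real {U ω} := by
  filter_upwards [ae_of_ae_map h.aemeasurable_fst
    (condDistrib_ae_eq_of_measure_eq_compProd W h.aemeasurable_snd h.map_eq)] with ω hω
  rw [condPointProb, hω]

lemma condPointProb_comp_measurePreserving {T : Ω' → Ω} (hT : MeasurePreserving T μ' μ)
    (hU : AEMeasurable U μ) (hW : AEMeasurable W μ) :
    condPointProb (U ∘ T) (W ∘ T) μ' =ᵐ[μ'] condPointProb U W μ ∘ T :=
  condPointProb_ae_eq_of_hasCondDistrib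
    (hasCondDistrib_comp_measurePreserving (hasCondDistrib_condDistrib hU hW) hT)

lemma condPointProb_prodMk (hU : AEMeasurable U μ) (hV : AEMeasurable V μ)
    (hW : AEMeasurable W μ) :
    condPointProb (fun ω => (U ω, V ω)) W μ =ᵐ[μ]
      fun ω => condPointProb U W μ ω * condPointProb V (fun ω => (W ω, U ω)) μ ω := by
  filter_upwards [condPointProb_ae_eq_of_hasCondDistrib
    (hasCondDistrib_prodMk (hasCondDistrib_condDistrib hU hW)
      (hasCondDistrib_condDistrib hV (hW.prodMk hU)))] with ω hω
  rw [hω, ← Set.singleton_prod_singleton, measureReal_def,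
    Kernel.compProd_apply_prod (measurableSet_singleton _) (measurableSet_singleton _),
    lintegral_singleton, mul_comm, ENNReal.toReal_mul]
  rfl

lemma condPointProb_comp_left (hU : AEMeasurable U μ) (hW : AEMeasurable W μ) {f : α → β}
    (hf : Measurable f) (hinj : Function.Injective f) :
    condPointProb (f ∘ U) W μ =ᵐ[μ] condPointProb U W μ := by
  filter_upwards [condPointProb_ae_eq_of_hasCondDistrib
    ((hasCondDistrib_condDistrib hU hW).comp_left hf)] with ω hω
  rw [hω, measureReal_def, Kernel.map_apply' _ hf _ (measurableSet_singleton _),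
    Function.comp_apply, ← Set.image_singleton, hinj.preimage_image]
  rfl

lemma condPointProb_comp_right (hU : AEMeasurable U μ) (hW : AEMeasurable W μ) (e : γ ≃ᵐ δ) :
    condPointProb U (e ∘ W) μ =ᵐ[μ] condPointProb U W μ := by
  filter_upwards [condPointProb_ae_eq_of_hasCondDistrib
    ((hasCondDistrib_condDistrib hU hW).measurableEquiv_comp_right e)] with ω hω
  rw [hω, Kernel.comap_apply, Function.comp_apply, e.symm_apply_apply, condPointProb]

lemma condPointProb_prodMk_comm {ε : Type*} [MeasurableSpace ε] {Z : Ω → ε}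
    (hU : AEMeasurable U μ) (hV : AEMeasurable V μ) (hW : AEMeasurable W μ)
    (hZ : AEMeasurable Z μ) :
    condPointProb (fun ω => (V ω, U ω)) (fun ω => (Z ω, W ω)) μ =ᵐ[μ]
      condPointProb (fun ω => (U ω, V ω)) (fun ω => (W ω, Z ω)) μ :=
  (condPointProb_comp_left (hU.prodMk hV) (hZ.prodMk hW) measurable_swap
    Prod.swap_injective).trans
    (condPointProb_comp_right (hU.prodMk hV) (hW.prodMk hZ) MeasurableEquiv.prodComm)

lemma ae_condPointProb_ne_zero (hU : AEMeasurable U μ) (hW : AEMeasurable W μ)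
    {R : Set (γ × α)} (hR : MeasurableSet R) (hRc : ∀ w, {u | (w, u) ∈ R}.Countable)
    (hWU : ∀ᵐ ω ∂μ, (W ω, U ω) ∈ R) : ∀ᵐ ω ∂μ, condPointProb U W μ ω ≠ 0 := by
  set κ := condDistrib U W μ
  have hs : MeasurableSet (R ∩ {p : γ × α | κ p.1 {p.2} = 0}) :=
    hR.inter (measurable_kernel_singleton κ (measurableSet_singleton 0))
  have hfiber (w : γ) : κ w (Prod.mk w ⁻¹' (R ∩ {p : γ × α | κ p.1 {p.2} = 0})) = 0 :=
    (measure_null_iff_singleton ((hRc w).mono fun _ hu => hu.1)).2 fun _ hu => hu.2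
  have hnull : μ.map (fun ω => (W ω, U ω)) (R ∩ {p : γ × α | κ p.1 {p.2} = 0}) = 0 := by
    rw [← compProd_map_condDistrib hU, Measure.compProd_apply hs]
    exact (lintegral_congr hfiber).trans lintegral_zero
  filter_upwards [hWU, ae_of_ae_map (hW.prodMk hU) (measure_eq_zero_iff_ae_notMem.1 hnull)]
    with ω hω hnot h0
  exact hnot ⟨hω, (measureReal_eq_zero_iff).1 h0⟩

lemma ae_condPointProb_ne_zero_of_countable [Countable α] (hU : AEMeasurable U μ)
    (hW : AEMeasurable W μ) : ∀ᵐ ω ∂μ, condPointProb U W μ ω ≠ 0 :=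
  ae_condPointProb_ne_zero hU hW .univ (fun _ => Set.to_countable _) (ae_of_all _ fun _ => trivial)

end CondPointProb

lemma aemeasurable_fst_of_ae_eq_prodMk {Ω α β : Type*} [MeasurableSpace Ω] [MeasurableSpace α]
    [MeasurableSpace β] {μ : Measure Ω} {f : Ω → α × β} {g : Ω → α} {h : Ω → β}
    (hf : AEMeasurable f μ) (hfgh : ∀ᵐ ω ∂μ, f ω = (g ω, h ω)) : AEMeasurable g μ :=
  hf.fst.congr (hfgh.mono fun ω hω => by simp [hω])

section Cohomology

variable {Ω A B α β : Type*} [MeasurableSpace Ω]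
  [MeasurableSpace A] [StandardBorelSpace A] [Nonempty A]
  [MeasurableSpace B] [StandardBorelSpace B] [Nonempty B]
  [MeasurableSpace α] [MeasurableSpace β] [StandardBorelSpace β] [Nonempty β]
  {μ : Measure Ω} [IsFiniteMeasure μ] {S : Ω → Ω}
  {X : Ω → α} {X₀ : Ω → A} {Y : Ω → β} {Y₀ : Ω → B} {e : α ≃ᵐ A × α} {f : β ≃ᵐ B × β}

/-- Both sides are the conditional probability of the pair `(X₀, Y)` given `X ∘ S`. -/
lemma condPointProb_mul_condPointProb_ae_eq (hS : MeasurePreserving S μ μ)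
    (hX : Measurable X) (hY : Measurable Y)
    (hX₀ : ∀ᵐ ω ∂μ, e (X ω) = (X₀ ω, X (S ω))) (hY₀ : ∀ᵐ ω ∂μ, f (Y ω) = (Y₀ ω, Y (S ω))) :
    ∀ᵐ ω ∂μ, condPointProb X₀ (fun ω => X (S ω)) μ ω * condPointProb Y X μ ω =
      condPointProb Y X μ (S ω) *
        condPointProb (fun ω => (X₀ ω, Y₀ ω)) (fun ω => (X (S ω), Y (S ω))) μ ω := by
  have hXS : AEMeasurable (fun ω => X (S ω)) μ := (hX.comp hS.measurable).aemeasurable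
  have hYS : AEMeasurable (fun ω => Y (S ω)) μ := (hY.comp hS.measurable).aemeasurable
  have hX₀m := aemeasurable_fst_of_ae_eq_prodMk (e.measurable.comp hX).aemeasurable hX₀
  have hY₀m := aemeasurable_fst_of_ae_eq_prodMk (f.measurable.comp hY).aemeasurable hY₀
  have chain_XY := condPointProb_prodMk hX₀m hY.aemeasurable hXS
  have recode_X : condPointProb Y (fun ω => (X (S ω), X₀ ω)) μ =ᵐ[μ] condPointProb Y X μ :=
    (condPointProb_congr .rfl (hX₀.mono fun ω h => by simp [h, MeasurableEquiv.prodComm])).trans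
      (condPointProb_comp_right hY.aemeasurable hX.aemeasurable (e.trans .prodComm))
  have chain_YS := condPointProb_prodMk hYS (hX₀m.prodMk hY₀m) hXS
  have stationary : condPointProb (fun ω => Y (S ω)) (fun ω => X (S ω)) μ =ᵐ[μ]
      fun ω => condPointProb Y X μ (S ω) :=
    condPointProb_comp_measurePreserving hS hY.aemeasurable hX.aemeasurable
  let r : A × β → β × A × B := fun p => ((f p.2).2, p.1, (f p.2).1)
  have hr : Function.Injective r := by
    rintro ⟨a, y⟩ ⟨a', y'⟩ h
    obtain ⟨h₂, rfl, h₁⟩ : (f y).2 = (f y').2 ∧ a = a' ∧ (f y).1 = (f y').1 := by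
      simpa [r] using h
    rw [f.injective (Prod.ext h₁ h₂)]
  have recode_Y : condPointProb (fun ω => (Y (S ω), X₀ ω, Y₀ ω)) (fun ω => X (S ω)) μ =ᵐ[μ]
      condPointProb (fun ω => (X₀ ω, Y ω)) (fun ω => X (S ω)) μ :=
    (condPointProb_congr (hY₀.mono fun ω h => by simp [r, h]) .rfl).trans
      (condPointProb_comp_left (hX₀m.prodMk hY.aemeasurable) hXS (by fun_prop) hr)
  filter_upwards [chain_XY, recode_X, chain_YS, stationary, recode_Y] with ω h₁ h₂ h₃ h₄ h₅
  calc condPointProb X₀ (fun ω => X (S ω)) μ ω * condPointProb Y X μ ω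
      = condPointProb (fun ω => (X₀ ω, Y ω)) (fun ω => X (S ω)) μ ω := by rw [h₁, ← h₂]
    _ = condPointProb (fun ω => (Y (S ω), X₀ ω, Y₀ ω)) (fun ω => X (S ω)) μ ω := h₅.symm
    _ = _ := by rw [h₃, h₄]

lemma neg_log_condPointProb_cohomologous [StandardBorelSpace α] [Nonempty α]
    [Countable A] [Countable B]
    (hS : MeasurePreserving S μ μ) (hX : Measurable X) (hY : Measurable Y)
    (hX₀ : ∀ᵐ ω ∂μ, e (X ω) = (X₀ ω, X (S ω))) (hY₀ : ∀ᵐ ω ∂μ, f (Y ω) = (Y₀ ω, Y (S ω)))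
    (hYX : ∀ᵐ ω ∂μ, condPointProb Y X μ ω ≠ 0) (hXY : ∀ᵐ ω ∂μ, condPointProb X Y μ ω ≠ 0) :
    ∃ g : Ω → ℝ, Measurable g ∧ ∀ᵐ ω ∂μ,
      -Real.log (condPointProb X₀ (fun ω => X (S ω)) μ ω) =
        -Real.log (condPointProb Y₀ (fun ω => Y (S ω)) μ ω) + g (S ω) - g ω := by
  have hXS : AEMeasurable (fun ω => X (S ω)) μ := (hX.comp hS.measurable).aemeasurable
  have hYS : AEMeasurable (fun ω => Y (S ω)) μ := (hY.comp hS.measurable).aemeasurable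
  have hX₀m := aemeasurable_fst_of_ae_eq_prodMk (e.measurable.comp hX).aemeasurable hX₀
  have hY₀m := aemeasurable_fst_of_ae_eq_prodMk (f.measurable.comp hY).aemeasurable hY₀
  refine ⟨fun ω => Real.log (condPointProb X Y μ ω) - Real.log (condPointProb Y X μ ω),
    (measurable_condPointProb hX hY).log.sub (measurable_condPointProb hY hX).log, ?_⟩
  filter_upwards [condPointProb_mul_condPointProb_ae_eq hS hX hY hX₀ hY₀,
    condPointProb_mul_condPointProb_ae_eq hS hY hX hY₀ hX₀,
    condPointProb_prodMk_comm hX₀m hY₀m hXS hYS,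
    ae_condPointProb_ne_zero_of_countable hX₀m hXS,
    ae_condPointProb_ne_zero_of_countable hY₀m hYS,
    ae_condPointProb_ne_zero_of_countable (hX₀m.prodMk hY₀m) (hXS.prodMk hYS),
    hYX, hXY, hS.quasiMeasurePreserving.ae hYX, hS.quasiMeasurePreserving.ae hXY]
    with ω hXY_eq hYX_eq hcomm hx hy hxy hyx hxy' hyxS hxyS
  have hlogXY := congrArg Real.log hXY_eq
  have hlogYX := congrArg Real.log (hYX_eq.trans (congrArg (_ * ·) hcomm))
  rw [Real.log_mul hx hyx, Real.log_mul hyxS hxy] at hlogXY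
  rw [Real.log_mul hy hxy', Real.log_mul hxyS hxy] at hlogYX
  linarith

end Cohomology

section BorelCantelli

lemma tsum_indicator_one_le_iInf {Ω : Type*} {s : ℕ → Set Ω} (hs : Antitone s) (ω : Ω) :
    ∑' n, (s n).indicator (fun _ => (1 : ℝ≥0∞)) ω ≤ ⨅ (n : ℕ) (_ : ω ∉ s n), (n : ℝ≥0∞) := by
  refine le_iInf₂ fun N hN => ?_
  have hzero (n : ℕ) (hn : n ∉ Finset.range N) :
      (s n).indicator (fun _ => (1 : ℝ≥0∞)) ω = 0 :=
    Set.indicator_of_notMem (fun h => hN (hs (by simpa using hn) h)) _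
  calc ∑' n, (s n).indicator (fun _ => (1 : ℝ≥0∞)) ω
      = ∑ n ∈ Finset.range N, (s n).indicator (fun _ => (1 : ℝ≥0∞)) ω := tsum_eq_sum hzero
    _ ≤ ∑ n ∈ Finset.range N, 1 :=
        Finset.sum_le_sum fun n _ => Set.indicator_le_self' (fun _ _ => zero_le) ω
    _ = N := by simp

variable {Ω : Type*} [MeasurableSpace Ω] {μ : Measure Ω}

lemma ae_exists_forall_iterate_notMem {T : Ω → Ω} (hT : MeasurePreserving T μ μ) {s : ℕ → Set Ω}
    (hs : ∑' n, μ (s n) ≠ ∞) : ∀ᵐ ω ∂μ, ∃ m, ∀ n, T^[n] ω ∉ s (m + n) := by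
  have hle (m : ℕ) : μ {ω | ∀ m, ∃ n, T^[n] ω ∈ s (m + n)} ≤ ∑' n, μ (s (n + m)) :=
    calc μ {ω | ∀ m, ∃ n, T^[n] ω ∈ s (m + n)}
        ≤ μ (⋃ n, T^[n] ⁻¹' s (n + m)) := measure_mono fun ω hω => by
          simpa [add_comm] using hω m
      _ ≤ ∑' n, μ (T^[n] ⁻¹' s (n + m)) := measure_iUnion_le _
      _ ≤ ∑' n, μ (s (n + m)) :=
          ENNReal.tsum_le_tsum fun n => (hT.iterate n).measure_preimage_le _
  have hnull : μ {ω | ∀ m, ∃ n, T^[n] ω ∈ s (m + n)} = 0 :=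
    le_antisymm (ge_of_tendsto' (ENNReal.tendsto_sum_nat_add _ hs) hle) zero_le
  filter_upwards [measure_eq_zero_iff_ae_notMem.1 hnull] with ω hω
  simpa using hω

lemma tsum_measure_le_lintegral_iInf {s : ℕ → Set Ω} (hs : Antitone s)
    (hsm : ∀ n, MeasurableSet (s n)) :
    ∑' n, μ (s n) ≤ ∫⁻ ω, ⨅ (n : ℕ) (_ : ω ∉ s n), (n : ℝ≥0∞) ∂μ :=
  calc ∑' n, μ (s n) = ∑' n, ∫⁻ ω, (s n).indicator (fun _ => 1) ω ∂μ := by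
        simp [lintegral_indicator_const (hsm _)]
    _ = ∫⁻ ω, ∑' n, (s n).indicator (fun _ => 1) ω ∂μ :=
        (lintegral_tsum fun n => (measurable_const.indicator (hsm n)).aemeasurable).symm
    _ ≤ _ := lintegral_mono fun ω => tsum_indicator_one_le_iInf hs ω

end BorelCantelli

section Sequences

variable {A : Type*}

lemma iterate_shift_apply (x : ℤ → A) (n : ℕ) (i : ℤ) : shift^[n] x i = x (i + n) := by
  induction n generalizing x with
  | zero => simp
  | succ n ih => rw [Function.iterate_succ_apply, ih, shift, Nat.cast_succ, add_assoc]

/-- The one-sided future `x₀, x₁, x₂, …` of a bi-infinite sequence, the present included. -/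
def futureSeq (x : ℤ → A) : ℕ → A := fun n => x n

/-- Extend the one-sided sequence `w` to the left by the word `c`, read away from the origin:
the `k`-th letter of `c` is put at position `-(k + 1)`. Positions beyond the end of `c` get the
filler `w 0`. -/
def glueLeft (c : List A) (w : ℕ → A) : ℤ → A
  | .ofNat n => w n
  | .negSucc n => c.getD n (w 0)

lemma exists_eqOn_glueLeft_futureSeq (x : ℤ → A) (m : ℕ) :
    ∃ c : List A, Set.EqOn (glueLeft c (futureSeq x)) x (Set.Ici (-(m : ℤ))) := by
  refine ⟨(List.range m).map fun k : ℕ => x (Int.negSucc k), ?_⟩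
  rintro (n | n) hn
  · rfl
  · have hnm : n < m := by
      rw [Set.mem_Ici] at hn
      omega
    simp [glueLeft, hnm]

variable [MeasurableSpace A]

lemma measurable_shift : Measurable (shift : (ℤ → A) → ℤ → A) :=
  measurable_pi_lambda _ fun n => measurable_pi_apply (n + 1)

lemma measurable_futureSeq : Measurable (futureSeq : (ℤ → A) → ℕ → A) :=
  measurable_pi_lambda _ fun n => measurable_pi_apply (n : ℤ)

lemma measurable_glueLeft (c : List A) : Measurable (glueLeft c) := by
  refine measurable_pi_lambda _ ?_
  rintro (n | n)
  · exact measurable_pi_apply n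
  · by_cases hn : n < c.length
    · simp [glueLeft, hn]
    · simpa [glueLeft, hn] using measurable_pi_apply 0

/-- A one-sided sequence is the same as its zeroth term together with its tail. -/
def seqUncons : (ℕ → A) ≃ᵐ A × (ℕ → A) where
  toFun w := (w 0, fun n => w (n + 1))
  invFun p n := n.casesOn p.1 p.2
  left_inv w := by
    funext n
    cases n <;> rfl
  right_inv _ := rfl
  measurable_toFun := by
    rw [Equiv.coe_fn_mk]
    fun_prop
  measurable_invFun := measurable_pi_lambda _ fun n => by
    cases n with
    | zero => exact measurable_fst
    | succ n => exact (measurable_pi_apply n).comp measurable_snd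

lemma seqUncons_futureSeq (x : ℤ → A) :
    seqUncons (futureSeq x) = (x 0, futureSeq (shift x)) :=
  rfl

lemma futureSigma_eq_comap :
    futureSigma A = MeasurableSpace.comap (fun x : ℤ → A => futureSeq (shift x)) inferInstance := by
  refine le_antisymm (iSup₂_le fun i hi => ?_) ?_
  · obtain ⟨n, rfl⟩ : ∃ n : ℕ, i = n + 1 := ⟨(i - 1).toNat, by
      rw [Set.mem_ofPred_eq] at hi
      omega⟩
    exact ((measurable_pi_apply n).comp
      (comap_measurable fun x : ℤ → A => futureSeq (shift x))).comap_le
  · refine Measurable.comap_le (@measurable_pi_lambda _ _ _ (futureSigma A) _ _ fun n => ?_)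
    exact Measurable.of_comap_le (le_iSup₂_of_le (n + 1 : ℤ) (by simp) le_rfl)

lemma infoCocycle_ae_eq [Fintype A] [DiscreteMeasurableSpace A] [Nonempty A]
    (μ : Measure (ℤ → A)) [IsFiniteMeasure μ] :
    infoCocycle μ =ᵐ[μ] fun x =>
      -Real.log (condPointProb (fun x => x 0) (fun x => futureSeq (shift x)) μ x) := by
  have hcond (a : A) : (fun x => (condDistrib (fun x : ℤ → A => x 0)
      (fun x => futureSeq (shift x)) μ (futureSeq (shift x))).real {a}) =ᵐ[μ]
      μ[Set.indicator {y : ℤ → A | y 0 = a} (fun _ => (1 : ℝ))|futureSigma A] := by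
    rw [futureSigma_eq_comap]
    exact condDistrib_ae_eq_condExp (measurable_futureSeq.comp measurable_shift)
      (measurable_pi_apply 0) (measurableSet_singleton a)
  filter_upwards [ae_all_iff.2 hcond] with x hx
  rw [infoCocycle, Finset.sum_eq_single (x 0), ← hx (x 0)]
  · simp [condPointProb]
  · intro a _ ha
    simp [ha.symm]
  · simp

end Sequences

lemma measurableSet_setOf_of_dependsOn {ι : Type*} {X : ι → Type*} [∀ i, MeasurableSpace (X i)]
    [∀ i, Countable (X i)] [∀ i, MeasurableSingletonClass (X i)] {s : Set ι} [Finite s]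
    {p : (∀ i, X i) → Prop} (hp : DependsOn p s) : MeasurableSet {x | p x} := by
  obtain ⟨f, rfl⟩ := dependsOn_iff_exists_comp.1 hp
  have hf : MeasurableSet {y | f y} := (Set.to_countable _).measurableSet
  exact hf.preimage (by fun_prop)

section Coding

variable {A B : Type*} {D : Set (ℤ → A)} {φ : (ℤ → A) → ℤ → B}

/-- The coordinates of `x` from `-q` on determine the zero coordinate of the image under `φ`, among
points of `D`. As for `DeterminesAt`, finitely many of these coordinates have to suffice. -/
def DeterminesFrom (D : Set (ℤ → A)) (φ : (ℤ → A) → ℤ → B) (q : ℕ) (x : ℤ → A) : Prop :=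
  ∃ r, DeterminesAt D φ q r x

/-- The past half `q(x)` of the code length: the least number of past coordinates needed to
determine the zero output coordinate (`⊤` if no finite window works). -/
def pastCodeLength (D : Set (ℤ → A)) (φ : (ℤ → A) → ℤ → B) (x : ℤ → A) : ℝ≥0∞ :=
  ⨅ (q : ℕ) (_ : DeterminesFrom D φ q x), (q : ℝ≥0∞)

lemma pastCodeLength_le_codeLength (D : Set (ℤ → A)) (φ : (ℤ → A) → ℤ → B) (x : ℤ → A) :
    pastCodeLength D φ x ≤ codeLength D φ x :=
  le_iInf fun q => le_iInf₂ fun r h => (iInf₂_le q ⟨r, h⟩).trans le_self_add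

lemma DeterminesFrom.mono {q q' : ℕ} {x : ℤ → A} (h : DeterminesFrom D φ q x) (hq : q ≤ q') :
    DeterminesFrom D φ q' x :=
  h.imp fun _ h y hy hyx => h y hy fun i hi => hyx i (by omega)

/-- Some window of `z` starting at `-q` occurs in `D` and forces the zero output coordinate to be
`b`. Unlike `DeterminesFrom`, this does not refer to the value of `φ` at `z`, which may lie outside
of `D`; it is therefore an event that depends measurably on `z`. -/
def IsForced (D : Set (ℤ → A)) (φ : (ℤ → A) → ℤ → B) (q : ℕ) (b : B) (z : ℤ → A) : Prop :=
  ∃ r : ℕ, (∃ x ∈ D, Set.EqOn x z (Set.Icc (-(q : ℤ)) r)) ∧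
    ∀ x ∈ D, Set.EqOn x z (Set.Icc (-(q : ℤ)) r) → φ x 0 = b

lemma DeterminesFrom.isForced {q : ℕ} {x : ℤ → A} (h : DeterminesFrom D φ q x) (hx : x ∈ D) :
    IsForced D φ q (φ x 0) x :=
  h.imp fun _ h => ⟨⟨x, hx, Set.eqOn_refl _ _⟩,
    fun y hy hyx => h y hy fun _ hi hi' => hyx ⟨hi, hi'⟩⟩

lemma IsForced.determinesFrom {q : ℕ} {b : B} {x : ℤ → A} (h : IsForced D φ q b x) (hx : x ∈ D) :
    DeterminesFrom D φ q x :=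
  h.imp fun _ h y hy hyx =>
    (h.2 y hy fun i hi => hyx i hi.1 hi.2).trans (h.2 x hx (Set.eqOn_refl _ _)).symm

lemma IsForced.unique {q : ℕ} {b b' : B} {z : ℤ → A} (h : IsForced D φ q b z)
    (h' : IsForced D φ q b' z) : b = b' := by
  obtain ⟨r, ⟨x, hx, hxz⟩, hb⟩ := h
  obtain ⟨r', ⟨x', hx', hxz'⟩, hb'⟩ := h'
  rcases le_total r r' with hr | hr
  · exact (hb x' hx' (hxz'.mono (Set.Icc_subset_Icc_right (by omega)))).symm.trans (hb' x' hx' hxz')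
  · exact (hb x hx hxz).symm.trans (hb' x hx (hxz.mono (Set.Icc_subset_Icc_right (by omega))))

lemma IsForced.congr {q : ℕ} {b : B} {z z' : ℤ → A} (h : IsForced D φ q b z)
    (hz : Set.EqOn z z' (Set.Ici (-(q : ℤ)))) : IsForced D φ q b z' :=
  h.imp fun _ ⟨⟨x, hx, hxz⟩, hb⟩ => ⟨⟨x, hx, hxz.trans (hz.mono Set.Icc_subset_Ici_self)⟩,
    fun y hy hyz => hb y hy (hyz.trans (hz.mono Set.Icc_subset_Ici_self).symm)⟩

variable [MeasurableSpace A] [Countable A] [MeasurableSingletonClass A]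

lemma measurableSet_isForced (D : Set (ℤ → A)) (φ : (ℤ → A) → ℤ → B) (q : ℕ) (b : B) :
    MeasurableSet {z | IsForced D φ q b z} := by
  rw [show {z | IsForced D φ q b z} = ⋃ r : ℕ, {z | (∃ x ∈ D, Set.EqOn x z (Set.Icc (-(q : ℤ)) r)) ∧
    ∀ x ∈ D, Set.EqOn x z (Set.Icc (-(q : ℤ)) r) → φ x 0 = b} by ext; simp [IsForced]]
  refine .iUnion fun r => measurableSet_setOf_of_dependsOn (s := Set.Icc (-(q : ℤ)) r) ?_
  intro z z' hz
  have hcongr (x : ℤ → A) : Set.EqOn x z (Set.Icc (-(q : ℤ)) r) ↔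
      Set.EqOn x z' (Set.Icc (-(q : ℤ)) r) :=
    ⟨fun h => h.trans hz, fun h => h.trans fun i hi => (hz i hi).symm⟩
  simp only [hcongr]

lemma measurableSet_isForced_apply {Ω : Type*} [MeasurableSpace Ω] [MeasurableSpace B]
    [Countable B] [MeasurableSingletonClass B] (D : Set (ℤ → A)) (φ : (ℤ → A) → ℤ → B) (q : ℕ)
    {b : Ω → B} {z : Ω → ℤ → A} (hb : Measurable b) (hz : Measurable z) :
    MeasurableSet {ω | IsForced D φ q (b ω) (z ω)} := by
  rw [show {ω | IsForced D φ q (b ω) (z ω)} = ⋃ a, b ⁻¹' {a} ∩ z ⁻¹' {x | IsForced D φ q a x} by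
    ext; simp]
  exact .iUnion fun a =>
    (hb (measurableSet_singleton a)).inter (hz (measurableSet_isForced D φ q a))

lemma measurableSet_sep_not_determinesFrom [Countable B] (hD : MeasurableSet D)
    (φ : (ℤ → A) → ℤ → B) (q : ℕ) : MeasurableSet {x ∈ D | ¬ DeterminesFrom D φ q x} := by
  rw [show {x ∈ D | ¬ DeterminesFrom D φ q x} = D \ ⋃ b, {x | IsForced D φ q b x} by
    ext x
    simp only [Set.mem_ofPred_eq, Set.mem_sdiff, Set.mem_iUnion]
    exact and_congr_right fun hx =>
      not_congr ⟨fun h => ⟨_, h.isForced hx⟩, fun ⟨_, h⟩ => h.determinesFrom hx⟩]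
  exact hD.diff (.iUnion fun b => measurableSet_isForced D φ q b)

end Coding

namespace IsFactorMap

variable {A B : Type*} [MeasurableSpace A] [MeasurableSpace B]
  {μ : Measure (ℤ → A)} {ν : Measure (ℤ → B)} {D : Set (ℤ → A)} {φ : (ℤ → A) → ℤ → B}

lemma measurePreserving (hφ : IsFactorMap μ ν D φ) : MeasurePreserving φ μ ν :=
  ⟨hφ.measurable_map, hφ.pushforward.symm⟩

lemma isProbabilityMeasure [IsProbabilityMeasure μ] (hφ : IsFactorMap μ ν D φ) :
    IsProbabilityMeasure ν :=
  hφ.pushforward ▸ Measure.isProbabilityMeasure_map hφ.measurable_map.aemeasurable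

lemma ae_mem_dom [IsProbabilityMeasure μ] (hφ : IsFactorMap μ ν D φ) : ∀ᵐ x ∂μ, x ∈ D :=
  (mem_ae_iff_prob_eq_one hφ.dom_measurable).2 hφ.dom_full

lemma ae_map_shift [IsProbabilityMeasure μ] (hφ : IsFactorMap μ ν D φ) :
    ∀ᵐ x ∂μ, φ (shift x) = shift (φ x) :=
  hφ.ae_mem_dom.mono hφ.equivariant

lemma measurePreserving_shift [IsProbabilityMeasure μ] (hφ : IsFactorMap μ ν D φ)
    (hμ : MeasurePreserving shift μ μ) : MeasurePreserving shift ν ν := by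
  refine ⟨measurable_shift, ?_⟩
  calc ν.map shift = μ.map (shift ∘ φ) := by
        rw [hφ.pushforward, Measure.map_map measurable_shift hφ.measurable_map]
    _ = μ.map (φ ∘ shift) := (Measure.map_congr hφ.ae_map_shift).symm
    _ = ν := (hφ.measurePreserving.comp hμ).map_eq

lemma iterate_shift_mem (hφ : IsFactorMap μ ν D φ) {x : ℤ → A} (hx : x ∈ D) (n : ℕ) :
    shift^[n] x ∈ D :=
  (show Set.MapsTo shift D D from hφ.dom_shift_invariant.ge).iterate n hx

lemma map_iterate_shift (hφ : IsFactorMap μ ν D φ) {x : ℤ → A} (hx : x ∈ D) (n : ℕ) :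
    φ (shift^[n] x) = shift^[n] (φ x) := by
  induction n with
  | zero => rfl
  | succ n ih => rw [Function.iterate_succ_apply', hφ.equivariant _ (hφ.iterate_shift_mem hx n), ih,
      Function.iterate_succ_apply']

lemma isForced_iterate_shift (hφ : IsFactorMap μ ν D φ) {x z : ℤ → A} (hx : x ∈ D) {m n : ℕ}
    (hdet : DeterminesFrom D φ (m + n) (shift^[n] x))
    (hz : Set.EqOn z x (Set.Ici (-(m : ℤ)))) :
    IsForced D φ (m + n) (φ x n) (shift^[n] z) := by
  have hforced := hdet.isForced (hφ.iterate_shift_mem hx n)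
  rw [hφ.map_iterate_shift hx, iterate_shift_apply, zero_add] at hforced
  refine hforced.congr fun i hi => ?_
  rw [iterate_shift_apply, iterate_shift_apply, hz]
  rw [Set.mem_Ici] at hi ⊢
  omega

lemma ae_exists_forall_determinesFrom [Countable A] [MeasurableSingletonClass A] [Countable B]
    [IsProbabilityMeasure μ] (hφ : IsFactorMap μ ν D φ) (hμ : MeasurePreserving shift μ μ)
    (hC : ∫⁻ x, pastCodeLength D φ x ∂μ < ⊤) :
    ∀ᵐ x ∂μ, ∃ m, ∀ n, DeterminesFrom D φ (m + n) (shift^[n] x) := by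
  have hanti : Antitone fun q => {x ∈ D | ¬ DeterminesFrom D φ q x} :=
    fun _ _ hq _ hx => ⟨hx.1, fun h => hx.2 (h.mono hq)⟩
  have hlength : ∀ᵐ x ∂μ, ⨅ (q : ℕ) (_ : x ∉ {x ∈ D | ¬ DeterminesFrom D φ q x}), (q : ℝ≥0∞) =
      pastCodeLength D φ x := hφ.ae_mem_dom.mono fun x hx => by simp [pastCodeLength, hx]
  have hsum : ∑' q, μ {x ∈ D | ¬ DeterminesFrom D φ q x} ≠ ∞ := by
    refine ne_top_of_le_ne_top hC.ne ?_
    rw [← lintegral_congr_ae hlength]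
    exact tsum_measure_le_lintegral_iInf hanti
      (measurableSet_sep_not_determinesFrom hφ.dom_measurable φ)
  filter_upwards [hφ.ae_mem_dom, ae_exists_forall_iterate_notMem hμ hsum] with x hx ⟨m, hm⟩
  exact ⟨m, fun n => by simpa [hφ.iterate_shift_mem hx n] using hm n⟩

lemma ae_condPointProb_futureSeq_ne_zero [Countable A] [MeasurableSingletonClass A]
    [Countable B] [MeasurableSingletonClass B] [Nonempty B] [IsProbabilityMeasure μ]
    (hφ : IsFactorMap μ ν D φ) (hμ : MeasurePreserving shift μ μ)
    (hC : ∫⁻ x, pastCodeLength D φ x ∂μ < ⊤) :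
    ∀ᵐ x ∂μ, condPointProb (fun x => futureSeq (φ x)) futureSeq μ x ≠ 0 := by
  let R : Set ((ℕ → A) × (ℕ → B)) := ⋃ (m : ℕ) (c : List A),
    {p | ∀ n, IsForced D φ (m + n) (p.2 n) (shift^[n] (glueLeft c p.1))}
  refine ae_condPointProb_ne_zero (measurable_futureSeq.comp hφ.measurable_map).aemeasurable
    measurable_futureSeq.aemeasurable (R := R) ?_ (fun w => ?_) ?_
  · refine .iUnion fun m => .iUnion fun c => ?_
    rw [Set.ofPred_forall]
    exact .iInter fun n => measurableSet_isForced_apply D φ _ (by fun_prop)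
      ((measurable_shift.iterate n).comp ((measurable_glueLeft c).comp measurable_fst))
  · simp only [R, Set.mem_iUnion, Set.ofPred_exists]
    refine Set.countable_iUnion fun m => Set.countable_iUnion fun c => Set.Subsingleton.countable ?_
    exact fun v hv v' hv' => funext fun n => (hv n).unique (hv' n)
  · filter_upwards [hφ.ae_mem_dom, hφ.ae_exists_forall_determinesFrom hμ hC] with x hx ⟨m, hm⟩
    obtain ⟨c, hc⟩ := exists_eqOn_glueLeft_futureSeq x m
    exact Set.mem_iUnion₂.2 ⟨m, c, fun n => hφ.isForced_iterate_shift hx (hm n) hc⟩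

lemma infoCocycle_comp_ae_eq [Fintype B] [DiscreteMeasurableSpace B] [Nonempty B]
    [IsProbabilityMeasure μ] (hφ : IsFactorMap μ ν D φ) :
    (fun x => infoCocycle ν (φ x)) =ᵐ[μ] fun x =>
      -Real.log (condPointProb (fun x => φ x 0) (fun x => futureSeq (φ (shift x))) μ x) := by
  have : IsProbabilityMeasure ν := hφ.isProbabilityMeasure
  have hpull := condPointProb_comp_measurePreserving hφ.measurePreserving
    (measurable_pi_apply 0).aemeasurable (measurable_futureSeq.comp measurable_shift).aemeasurable
  have hequivariant := condPointProb_congr (.refl _ fun x => φ x 0)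
    (hφ.ae_map_shift.mono fun x hx => congrArg futureSeq hx)
  filter_upwards [hφ.measurePreserving.quasiMeasurePreserving.ae (infoCocycle_ae_eq ν), hpull,
    hequivariant] with x hinfo hpull hequivariant
  rw [hinfo, hequivariant]
  exact congrArg (-Real.log ·) hpull.symm

end IsFactorMap

theorem info_cocycles_cohomologous_of_fect_general
    {A B : Type*} [Fintype A] [Fintype B]
    [MeasurableSpace A] [DiscreteMeasurableSpace A]
    [MeasurableSpace B] [DiscreteMeasurableSpace B]
    {μ : Measure (ℤ → A)} {ν : Measure (ℤ → B)} [IsProbabilityMeasure μ]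
    (hμ : MeasurePreserving shift μ μ)
    {D : Set (ℤ → A)} {E : Set (ℤ → B)}
    {φ : (ℤ → A) → (ℤ → B)} {ψ : (ℤ → B) → (ℤ → A)}
    (hφ : IsFactorMap μ ν D φ) (hψ : IsFactorMap ν μ E ψ) (hψφ : ∀ᵐ x ∂μ, ψ (φ x) = x)
    (hCφ : (∫⁻ x, pastCodeLength D φ x ∂μ) < ⊤)
    (hCψ : (∫⁻ y, pastCodeLength E ψ y ∂ν) < ⊤) :
    ∃ g : (ℤ → A) → ℝ, Measurable g ∧
      ∀ᵐ x ∂μ, infoCocycle μ x = infoCocycle ν (φ x) + g (shift x) - g x := by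
  have : IsProbabilityMeasure ν := hφ.isProbabilityMeasure
  have : Nonempty A := (nonempty_of_isProbabilityMeasure μ).map fun x => x 0
  have : Nonempty B := (nonempty_of_isProbabilityMeasure ν).map fun y => y 0
  have hpos_image := hφ.ae_condPointProb_futureSeq_ne_zero hμ hCφ
  have hpos_source : ∀ᵐ x ∂μ, condPointProb futureSeq (fun x => futureSeq (φ x)) μ x ≠ 0 := by
    filter_upwards [hφ.measurePreserving.quasiMeasurePreserving.ae
        (hψ.ae_condPointProb_futureSeq_ne_zero (hφ.measurePreserving_shift hμ) hCψ),
      condPointProb_comp_measurePreserving hφ.measurePreserving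
        (measurable_futureSeq.comp hψ.measurable_map).aemeasurable
        measurable_futureSeq.aemeasurable,
      condPointProb_congr (hψφ.mono fun x hx => congrArg futureSeq hx)
        (.refl _ fun x => futureSeq (φ x))] with x hne hpull hinv
    rw [← hinv]
    exact hpull.trans_ne hne
  obtain ⟨g, hg, hcohomologous⟩ := neg_log_condPointProb_cohomologous (Y₀ := fun x => φ x 0) hμ
    measurable_futureSeq (measurable_futureSeq.comp hφ.measurable_map)
    (ae_of_all _ seqUncons_futureSeq)
    (hφ.ae_map_shift.mono fun x hx => hx ▸ seqUncons_futureSeq (φ x)) hpos_image hpos_source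
  refine ⟨g, hg, ?_⟩
  filter_upwards [hcohomologous, infoCocycle_ae_eq μ, hφ.infoCocycle_comp_ae_eq]
    with x hx hinfo_source hinfo_image
  rw [hinfo_source, hinfo_image]
  exact hx

/-- **Parry.** If `φ` is a finitary isomorphism between ergodic finite-state shift systems
such that both `φ` and `φ⁻¹` have finite expected code lengths, then the information
cocycles `I_S` and `I_T ∘ φ` are cohomologous with a finite-valued measurable transfer
function: `I_S = I_T ∘ φ + g ∘ S - g` almost everywhere. -/
theorem info_cocycles_cohomologous_of_fect
    {A B : Type*} [Fintype A] [Fintype B]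
    [MeasurableSpace A] [DiscreteMeasurableSpace A]
    [MeasurableSpace B] [DiscreteMeasurableSpace B]
    (μ : Measure (ℤ → A)) (ν : Measure (ℤ → B))
    [IsProbabilityMeasure μ] [IsProbabilityMeasure ν]
    (hμerg : Ergodic shift μ) (hνerg : Ergodic shift ν)
    (D : Set (ℤ → A)) (E : Set (ℤ → B))
    (φ : (ℤ → A) → (ℤ → B)) (ψ : (ℤ → B) → (ℤ → A))
    (hiso : IsFinitaryIsomorphism μ ν D E φ ψ)
    (hCφ : (∫⁻ x, codeLength D φ x ∂μ) < ⊤)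
    (hCψ : (∫⁻ y, codeLength E ψ y ∂ν) < ⊤) :
    ∃ g : (ℤ → A) → ℝ, Measurable g ∧
      ∀ᵐ x ∂μ, infoCocycle μ x = infoCocycle ν (φ x) + g (shift x) - g x := by
  obtain ⟨hφ, hψ, -, -, hinv, -⟩ := hiso
  exact info_cocycles_cohomologous_of_fect_general hμerg.toMeasurePreserving hφ hψ
    (hφ.ae_mem_dom.mono fun x hx => (hinv x hx).2)
    ((lintegral_mono (pastCodeLength_le_codeLength D φ)).trans_lt hCφ)
    ((lintegral_mono (pastCodeLength_le_codeLength E ψ)).trans_lt hCψ)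
end
end
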